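/- arXiv:0712.1093 — 2 statements merged into one kernel-verified Lean document; each statement's English description precedes it below -/
import Mathlib

section
/- Let t > 0 and y > 0, and let f : ℝ × ℝ → ℝ be a nonnegative Borel measurable function. Then E[ f(M_t, A_t) · 1{A_t < 2/y} ] = e^{-y} · E[ f( M_t / (1 + (y/2)·A_t)^2 , A_t / (1 + (y/2)·A_t) ) · exp( M_t / (y^{-1} + (1/2)·A_t) ) ]. -/
open MeasureTheory ProbabilityTheory Real Set

noncomputable section

/-- A standard one-dimensional Brownian motion `B` (with `B 0 = 0`, continuous
paths, Gaussian increments and independent increments) on a probability space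
with measure `P`. -/
structure IsBrownianMotion {Ω : Type*} [MeasurableSpace Ω]
    (P : Measure Ω) (B : ℝ → Ω → ℝ) : Prop where
  isProbabilityMeasure : IsProbabilityMeasure P
  measurable : ∀ t : ℝ, Measurable (B t)
  start : ∀ ω, B 0 ω = 0
  continuous_paths : ∀ ω, Continuous fun t => B t ω
  gaussian_increments : ∀ s t : ℝ, 0 ≤ s → s ≤ t →
    P.map (fun ω => B t ω - B s ω) = gaussianReal 0 (Real.toNNReal (t - s))
  indep_increments : ∀ t : ℕ → ℝ, Monotone t → 0 ≤ t 0 →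
    iIndepFun
      (fun (i : ℕ) (ω : Ω) => B (t (i + 1)) ω - B (t i) ω) P

/-- The exponential martingale `M_t = exp (B_t - t/2)`. -/
def M {Ω : Type*} (B : ℝ → Ω → ℝ) (t : ℝ) (ω : Ω) : ℝ :=
  Real.exp (B t ω - t / 2)

/-- The time integral `A_t = ∫_0^t exp (B_s - s/2) ds`. -/
def A {Ω : Type*} (B : ℝ → Ω → ℝ) (t : ℝ) (ω : Ω) : ℝ :=
  ∫ s in (0 : ℝ)..t, Real.exp (B s ω - s / 2)

/-- The time integral with drift `ν`: `A_t^{(ν)} = ∫_0^t exp (B_s + (ν - 1/2) s) ds`. -/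
def Adrift {Ω : Type*} (B : ℝ → Ω → ℝ) (ν t : ℝ) (ω : Ω) : ℝ :=
  ∫ s in (0 : ℝ)..t, Real.exp (B s ω + (ν - 1 / 2) * s)

variable {Ω : Type*} [MeasurableSpace Ω] (P : MeasureTheory.Measure Ω) (B : ℝ → Ω → ℝ)

/-!
For `c ∈ ℝ` the maps `(m, a) ↦ (m / (1 + c a)², a / (1 + c a))` form a flow, and the weights
`exp (2 c (m / (1 + c a) - 1))` are a multiplicative cocycle over it; the identity says that
reweighting and then applying the flow at time `c = y / 2` turns the law of `(M t, A t)` into its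
restriction to `{1 - c a > 0}`. Approximate `(M, A)` by a Markov chain in which `M` is sampled on a
grid and `A` grows on each cell by the geometric mean of the endpoint values of `M`. The flow maps
a step of this chain exactly to a step with another increment, so a one-dimensional change of
variables in each Gaussian increment shows that the flow, with the product of the Jacobian factors
as density, sends the law of the chain to a smaller measure. The logarithm of each factor differs
from the increment of the logarithmic weight by a third-order term in the Gaussian increment, and
the sum of the cubes tends to zero, so the densities converge to the weight and Fatou's lemma gives
the inequality for the law of `(M t, A t)`. The same inequality for `-c`, which inverts the flow,
forces equality.
-/

open Filter Topology
open scoped ENNReal NNReal BoundedContinuousFunction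

theorem measure_le_of_forall_lintegral_le {E : Type*} [TopologicalSpace E]
    [TopologicalSpace.PseudoMetrizableSpace E] [MeasurableSpace E] [BorelSpace E] {μ ν : Measure E}
    [IsFiniteMeasure μ] (h : ∀ G : E →ᵇ ℝ≥0, ∫⁻ x, G x ∂ν ≤ ∫⁻ x, G x ∂μ) : ν ≤ μ := by
  have : IsFiniteMeasure ν := ⟨by
    have h_one := h 1
    simp only [BoundedContinuousFunction.coe_one, Pi.one_apply, ENNReal.coe_one,
      lintegral_one] at h_one
    exact h_one.trans_lt (measure_lt_top μ _)⟩
  have closed_le : ∀ F, IsClosed F → ν F ≤ μ F := fun F hF =>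
    le_of_tendsto_of_tendsto' (HasOuterApproxClosed.tendsto_lintegral_apprSeq hF ν)
      (HasOuterApproxClosed.tendsto_lintegral_apprSeq hF μ)
      fun n => h _
  refine Measure.le_iff.2 fun s hs => ?_
  rw [hs.measure_eq_iSup_isClosed_of_ne_top (measure_ne_top ν s)]
  exact iSup₂_le fun F hFs => iSup_le fun hF => (closed_le F hF).trans (measure_mono hFs)

theorem tendsto_lintegral_boundedContinuousFunction_comp {Ω E : Type*} [MeasurableSpace Ω]
    [TopologicalSpace E] [MeasurableSpace E] [OpensMeasurableSpace E] {μ : Measure Ω}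
    [IsFiniteMeasure μ] {X : ℕ → Ω → E} {Y : Ω → E} (hX : ∀ i, Measurable (X i))
    (hlim : ∀ᵐ ω ∂μ, Tendsto (fun i => X i ω) atTop (𝓝 (Y ω))) (G : E →ᵇ ℝ≥0) :
    Tendsto (fun i => ∫⁻ ω, G (X i ω) ∂μ) atTop (𝓝 (∫⁻ ω, G (Y ω) ∂μ)) := by
  have hG : Measurable G := G.continuous.measurable
  refine tendsto_lintegral_of_dominated_convergence (fun _ => (nndist G 0 : ℝ≥0∞))
    (fun i => (hG.comp (hX i)).coe_nnreal_ennreal)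
    (fun i => ae_of_all _ fun ω => ENNReal.coe_le_coe.2
      (BoundedContinuousFunction.NNReal.upper_bound G _))
    (by rw [lintegral_const]; finiteness) ?_
  filter_upwards [hlim] with ω hω
  exact ENNReal.tendsto_coe.2 ((G.continuous.tendsto _).comp hω)

theorem abs_mul_sub_integral_le {F : ℝ → ℝ} {a b v η : ℝ} (hab : a ≤ b)
    (hF : IntervalIntegrable F volume a b) (hv : ∀ s ∈ Icc a b, |v - F s| ≤ η) :
    |(b - a) * v - ∫ s in a..b, F s| ≤ η * (b - a) := by
  have h := intervalIntegral.norm_integral_le_of_norm_le_const (f := fun s => v - F s) (a := a)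
    (b := b) (C := η) fun s hs => hv s (Ioc_subset_Icc_self (uIoc_of_le hab ▸ hs))
  rwa [intervalIntegral.integral_sub intervalIntegrable_const hF,
    intervalIntegral.integral_const, smul_eq_mul, Real.norm_eq_abs,
    abs_of_nonneg (sub_nonneg.2 hab)] at h

theorem abs_sub_lt_of_mem_uIcc {a b v w η : ℝ} (hv : v ∈ uIcc a b) (ha : |a - w| < η)
    (hb : |b - w| < η) : |v - w| < η := by
  rw [abs_lt] at *
  rcases mem_uIcc.1 hv with h | h <;> constructor <;> linarith [h.1, h.2]

theorem abs_sum_mul_sub_integral_le {F : ℝ → ℝ} {a v : ℕ → ℝ} {η : ℝ} {n : ℕ}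
    (ha : ∀ k < n, a k ≤ a (k + 1))
    (hF : ∀ k < n, IntervalIntegrable F volume (a k) (a (k + 1)))
    (hv : ∀ k < n, ∀ s ∈ Icc (a k) (a (k + 1)), |v k - F s| ≤ η) :
    |∑ k ∈ Finset.range n, (a (k + 1) - a k) * v k - ∫ s in a 0..a n, F s| ≤
      η * (a n - a 0) := by
  rw [← intervalIntegral.sum_integral_adjacent_intervals hF, ← Finset.sum_sub_distrib,
    ← Finset.sum_range_sub a n, Finset.mul_sum]
  refine (Finset.abs_sum_le_sum_abs _ _).trans (Finset.sum_le_sum fun k hk => ?_)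
  have hk : k < n := Finset.mem_range.1 hk
  exact abs_mul_sub_integral_le (ha k hk) (hF k hk) (hv k hk)

theorem tendsto_riemannSum {F : ℝ → ℝ} {t : ℝ} (ht : 0 < t) (hF : ContinuousOn F (Icc 0 t))
    {v : ℕ → ℕ → ℝ}
    (hv : ∀ n k : ℕ, v n k ∈ uIcc (F (k * (t / n))) (F ((k + 1 : ℕ) * (t / n)))) :
    Tendsto (fun n : ℕ => ∑ k ∈ Finset.range n, t / n * v n k) atTop
      (𝓝 (∫ s in (0 : ℝ)..t, F s)) := by
  have hunif := Metric.uniformContinuousOn_iff.1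
    (isCompact_Icc.uniformContinuousOn_of_continuous hF)
  refine Metric.tendsto_atTop.2 fun η hη => ?_
  obtain ⟨d, hd, hFd⟩ := hunif (η / (2 * t)) (by positivity)
  obtain ⟨N, hN⟩ := exists_nat_gt (t / d)
  refine ⟨N, fun n hn => ?_⟩
  have hNn : t / d < n := hN.trans_le (Nat.cast_le.2 hn)
  have hn0 : (0 : ℝ) < n := (div_pos ht hd).trans hNn
  set δ := t / n
  have hδ0 : 0 < δ := div_pos ht hn0
  have hδd : δ < d := (div_lt_comm₀ hd hn0).1 hNn
  have hnδ : n * δ = t := mul_div_cancel₀ t hn0.ne'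
  have hcell : ∀ k : ℕ, ((k + 1 : ℕ) : ℝ) * δ - k * δ = δ := fun k => by push_cast; ring
  have hle : ∀ k : ℕ, (k : ℝ) * δ ≤ (k + 1 : ℕ) * δ := fun k => by linarith [hcell k]
  have hsub : ∀ k < n, Icc (k * δ) ((k + 1 : ℕ) * δ) ⊆ Icc 0 t := fun k hk =>
    Icc_subset_Icc (by positivity) (hnδ ▸ by gcongr; exact hk)
  have hosc : ∀ k < n, ∀ s ∈ Icc (k * δ) ((k + 1 : ℕ) * δ), |v n k - F s| ≤ η / (2 * t) := by
    intro k hk s hs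
    have hclose : ∀ r ∈ Icc (k * δ) ((k + 1 : ℕ) * δ), |F r - F s| < η / (2 * t) := fun r hr =>
      hFd r (hsub k hk hr) s (hsub k hk hs)
        ((Real.dist_le_of_mem_Icc hr hs).trans_lt ((hcell k).trans_lt hδd))
    exact (abs_sub_lt_of_mem_uIcc (hv n k) (hclose _ (left_mem_Icc.2 (hle k)))
      (hclose _ (right_mem_Icc.2 (hle k)))).le
  have hsum := abs_sum_mul_sub_integral_le (a := fun k => k * δ) (fun k _ => hle k)
    (fun k hk => (hF.mono (hsub k hk)).intervalIntegrable_of_Icc (hle k)) hosc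
  simp only [hcell, hnδ, Nat.cast_zero, zero_mul, sub_zero] at hsum
  calc dist (∑ k ∈ Finset.range n, δ * v n k) (∫ s in (0 : ℝ)..t, F s)
      ≤ η / (2 * t) * t := hsum
    _ = η / 2 := by field_simp
    _ < η := half_lt_self hη

theorem mul_exp_half_mem_uIcc {m : ℝ} (hm : 0 ≤ m) (u : ℝ) :
    m * Real.exp (u / 2) ∈ uIcc m (m * Real.exp u) := by
  rcases le_total 0 u with hu | hu
  · refine mem_uIcc_of_le (le_mul_of_one_le_right hm (Real.one_le_exp (by linarith))) ?_
    gcongr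
    linarith
  · refine mem_uIcc_of_ge ?_ (mul_le_of_le_one_right hm (Real.exp_le_one_iff.2 (by linarith)))
    gcongr
    linarith

theorem abs_sinh_sub_self_le {x : ℝ} (hx : |x| ≤ 1) : |Real.sinh x - x| ≤ |x| ^ 3 := by
  have h₁ := Real.exp_bound hx (n := 3) (by norm_num)
  have h₂ := Real.exp_bound (x := -x) (by rwa [abs_neg]) (n := 3) (by norm_num)
  norm_num [Finset.sum_range_succ, Nat.factorial] at h₁ h₂
  rw [Real.sinh_eq]
  rw [abs_le] at h₁ h₂ ⊢
  have : 0 ≤ |x| ^ 3 := by positivity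
  constructor <;> linarith [h₁.1, h₁.2, h₂.1, h₂.2]

theorem abs_mul_sub_sinh_mul_sinh_le {x y : ℝ} (hx : |x| ≤ 1) (hy : |y| ≤ 1) :
    |x * y - Real.sinh x * Real.sinh y| ≤ 2 * |x| * (|x| + |y|) ^ 3 := by
  have hsx := abs_sinh_sub_self_le hx
  have hsy := abs_sinh_sub_self_le hy
  have hsinh : |Real.sinh y| ≤ 2 * |y| := by
    have hcube : |y| ^ 3 ≤ |y| := pow_le_of_le_one (abs_nonneg y) hy (by norm_num)
    linarith [abs_sub_abs_le_abs_sub (Real.sinh y) y]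
  calc |x * y - Real.sinh x * Real.sinh y|
      = |-(x * (Real.sinh y - y)) - (Real.sinh x - x) * Real.sinh y| := by ring_nf
    _ ≤ |x| * |Real.sinh y - y| + |Real.sinh x - x| * |Real.sinh y| := by
        rw [← abs_mul, ← abs_mul, ← abs_neg (x * _)]
        exact abs_sub _ _
    _ ≤ |x| * |y| ^ 3 + |x| ^ 3 * (2 * |y|) := by gcongr
    _ ≤ 2 * |x| * (|x| + |y|) ^ 3 := by
        have hx0 := abs_nonneg x
        have hy0 := abs_nonneg y
        generalize |x| = a at hx0
        generalize |y| = b at hy0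
        have : 0 ≤ 2 * a ^ 4 + 6 * a ^ 2 * b ^ 2 + 4 * a ^ 3 * b + a * b ^ 3 := by positivity
        linarith [show 2 * a * (a + b) ^ 3 = a * b ^ 3 + a ^ 3 * (2 * b) +
          (2 * a ^ 4 + 6 * a ^ 2 * b ^ 2 + 4 * a ^ 3 * b + a * b ^ 3) by ring]

theorem abs_log_div_le {p q l : ℝ} (hl : 0 < l) (hp : l ≤ p) (hq : l ≤ q) :
    |Real.log (q / p)| ≤ |q - p| / l := by
  have log_le : ∀ {p q : ℝ}, l ≤ p → l ≤ q → Real.log (q / p) ≤ |q - p| / l := by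
    intro p q hp hq
    have hp0 : 0 < p := hl.trans_le hp
    calc Real.log (q / p) ≤ q / p - 1 := Real.log_le_sub_one_of_pos (div_pos (hl.trans_le hq) hp0)
      _ = (q - p) / p := by field_simp
      _ ≤ |q - p| / l := by gcongr; exact le_abs_self _
  refine abs_le'.2 ⟨log_le hp hq, ?_⟩
  rw [← Real.log_inv, inv_div, abs_sub_comm]
  exact log_le hq hp

theorem indepFun_of_measurable_iSup_comap {Ω α β : Type*} {mΩ : MeasurableSpace Ω}
    [MeasurableSpace α] [MeasurableSpace β] {μ : Measure Ω} {Z : ℕ → Ω → β} {X : Ω → α} {n : ℕ}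
    (hZm : ∀ k, Measurable (Z k)) (hZ : iIndepFun Z μ)
    (hX : Measurable[⨆ k ∈ Iio n, MeasurableSpace.comap (Z k) inferInstance] X) :
    IndepFun X (Z n) μ := by
  have h := indep_iSup_of_disjoint (S := Iio n) (T := {n}) (fun k => (hZm k).comap_le) hZ (by simp)
  rw [iSup_singleton] at h
  exact (IndepFun_iff_Indep _ _ _).2 (indep_of_indep_of_le_left h hX.comap_le)

theorem lintegral_comp_prodMk_of_indepFun {Ω α β : Type*} {mΩ : MeasurableSpace Ω}
    [MeasurableSpace α] [MeasurableSpace β] {μ : Measure Ω} [IsFiniteMeasure μ] {X : Ω → α}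
    {Y : Ω → β} (hX : Measurable X) (hY : Measurable Y) (hXY : IndepFun X Y μ)
    {F : α × β → ℝ≥0∞} (hF : Measurable F) :
    ∫⁻ ω, F (X ω, Y ω) ∂μ = ∫⁻ ω, ∫⁻ y, F (X ω, y) ∂(μ.map Y) ∂μ := by
  rw [← lintegral_map hF (hX.prodMk hY),
    (indepFun_iff_map_prod_eq_prod_map_map hX.aemeasurable hY.aemeasurable).1 hXY,
    lintegral_prod _ hF.aemeasurable, lintegral_map hF.lintegral_prod_right' hX]

theorem lintegral_enorm_pow_gaussianReal (v : ℝ≥0) (p : ℕ) :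
    ∫⁻ x, ‖x‖ₑ ^ p ∂(gaussianReal 0 v) =
      ENNReal.ofReal (√v ^ p) * ∫⁻ x, ‖x‖ₑ ^ p ∂(gaussianReal 0 1) := by
  have hscale : (gaussianReal 0 1).map (√v * ·) = gaussianReal 0 v := by
    rw [gaussianReal_map_const_mul, mul_zero, mul_one]
    congr 1
    exact NNReal.eq (Real.sq_sqrt v.coe_nonneg)
  rw [← hscale, lintegral_map (by fun_prop) (by fun_prop), ← lintegral_const_mul _ (by fun_prop)]
  refine lintegral_congr fun x => ?_
  rw [enorm_mul, mul_pow, Real.enorm_of_nonneg (Real.sqrt_nonneg _),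
    ENNReal.ofReal_pow (Real.sqrt_nonneg _)]

theorem lintegral_enorm_pow_gaussianReal_ne_top (p : ℕ) (v : ℝ≥0) :
    ∫⁻ x, ‖x‖ₑ ^ p ∂(gaussianReal 0 v) ≠ ∞ := by
  have h := ((memLp_id_gaussianReal (μ := 0) (v := v) p).integrable_norm_pow').hasFiniteIntegral
  simpa [HasFiniteIntegral] using h.ne

/-! ### The weighted flow and its action on measures -/

/-- The transformation `(m, a) ↦ (m / (1 + c a)², a / (1 + c a))` of the state `(M t, A t)`; the
identity with parameter `y` is the case `c = y / 2`. Only the values on `asianDomain c` matter. -/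
def asianTransform (c : ℝ) (p : ℝ × ℝ) : ℝ × ℝ :=
  (p.1 / (1 + c * p.2) ^ 2, p.2 / (1 + c * p.2))

/-- The half-plane of states `(m, a)` on which the flow `asianTransform` has not exploded before
time `c`. -/
def asianDomain (c : ℝ) : Set (ℝ × ℝ) := {p | 0 < 1 + c * p.2}

/-- The logarithm of the density that compensates `asianTransform c`. -/
def asianLogWeight (c : ℝ) (p : ℝ × ℝ) : ℝ :=
  2 * c * (p.1 / (1 + c * p.2) - 1)

/-- The density with logarithm `asianLogWeight c`, set to zero outside `asianDomain c`. -/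
def asianWeight (c : ℝ) : ℝ × ℝ → ℝ≥0∞ :=
  (asianDomain c).indicator fun p => ENNReal.ofReal (Real.exp (asianLogWeight c p))

/-- The action of the parameter `c` on measures: reweight by `asianWeight c`, then push forward by
`asianTransform c`. -/
def asianPush (c : ℝ) (μ : Measure (ℝ × ℝ)) : Measure (ℝ × ℝ) :=
  (μ.withDensity (asianWeight c)).map (asianTransform c)

@[fun_prop]
theorem measurable_asianTransform (c : ℝ) : Measurable (asianTransform c) := by
  unfold asianTransform
  fun_prop

theorem measurableSet_asianDomain (c : ℝ) : MeasurableSet (asianDomain c) :=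
  measurableSet_lt measurable_const (by fun_prop)

@[fun_prop]
theorem measurable_asianLogWeight (c : ℝ) : Measurable (asianLogWeight c) := by
  unfold asianLogWeight
  fun_prop

@[fun_prop]
theorem measurable_asianWeight (c : ℝ) : Measurable (asianWeight c) :=
  (measurable_asianLogWeight c).exp.ennreal_ofReal.indicator (measurableSet_asianDomain c)

theorem asianWeight_of_mem {c : ℝ} {p : ℝ × ℝ} (hp : p ∈ asianDomain c) :
    asianWeight c p = ENNReal.ofReal (Real.exp (asianLogWeight c p)) :=
  indicator_of_mem hp _

theorem asianWeight_of_notMem {c : ℝ} {p : ℝ × ℝ} (hp : p ∉ asianDomain c) :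
    asianWeight c p = 0 :=
  indicator_of_notMem hp _

theorem asianWeight_ne_top (c : ℝ) (p : ℝ × ℝ) : asianWeight c p ≠ ∞ := by
  by_cases hp : p ∈ asianDomain c
  · simp [asianWeight_of_mem hp]
  · simp [asianWeight_of_notMem hp]

@[simp]
theorem asianTransform_zero (p : ℝ × ℝ) : asianTransform 0 p = p := by
  simp [asianTransform]

@[simp]
theorem asianWeight_zero (p : ℝ × ℝ) : asianWeight 0 p = 1 := by
  simp [asianWeight, asianDomain, asianLogWeight]

theorem one_add_mul_asianTransform_snd {c : ℝ} {p : ℝ × ℝ} (hp : p ∈ asianDomain c) (d : ℝ) :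
    1 + d * (asianTransform c p).2 = (1 + (c + d) * p.2) / (1 + c * p.2) := by
  have h0 : 1 + c * p.2 ≠ 0 := ne_of_gt hp
  rw [asianTransform, eq_div_iff h0, add_mul, mul_assoc, div_mul_cancel₀ _ h0]
  ring

theorem asianTransform_mem_asianDomain {c d : ℝ} {p : ℝ × ℝ} (hp : p ∈ asianDomain c) :
    asianTransform c p ∈ asianDomain d ↔ p ∈ asianDomain (c + d) := by
  rw [asianDomain, mem_ofPred_eq, one_add_mul_asianTransform_snd hp]
  exact div_pos_iff_of_pos_right hp

theorem asianTransform_asianTransform {c : ℝ} {p : ℝ × ℝ} (hp : p ∈ asianDomain c) (d : ℝ) :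
    asianTransform d (asianTransform c p) = asianTransform (c + d) p := by
  have h0 : 1 + c * p.2 ≠ 0 := ne_of_gt hp
  rw [asianTransform, one_add_mul_asianTransform_snd hp, div_pow]
  exact Prod.ext (div_div_div_cancel_right₀ (pow_ne_zero 2 h0) _ _)
    (div_div_div_cancel_right₀ h0 _ _)

theorem asianLogWeight_add_asianLogWeight {c d : ℝ} {p : ℝ × ℝ} (hp : p ∈ asianDomain c)
    (hcd : p ∈ asianDomain (c + d)) :
    asianLogWeight c p + asianLogWeight d (asianTransform c p) = asianLogWeight (c + d) p := by
  have h0 : 1 + c * p.2 ≠ 0 := ne_of_gt hp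
  have h1 : 1 + (c + d) * p.2 ≠ 0 := ne_of_gt hcd
  have huv : c * (1 + (c + d) * p.2) + d = (c + d) * (1 + c * p.2) := by ring
  simp only [asianLogWeight, one_add_mul_asianTransform_snd hp]
  rw [asianTransform]
  generalize 1 + c * p.2 = u at h0 huv ⊢
  generalize 1 + (c + d) * p.2 = v at h1 huv ⊢
  field_simp
  linear_combination p.1 * huv

theorem asianWeight_mul_asianWeight {c : ℝ} {p : ℝ × ℝ} (hp : p ∈ asianDomain c) (d : ℝ) :
    asianWeight c p * asianWeight d (asianTransform c p) = asianWeight (c + d) p := by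
  by_cases hcd : p ∈ asianDomain (c + d)
  · rw [asianWeight_of_mem hp, asianWeight_of_mem ((asianTransform_mem_asianDomain hp).2 hcd),
      asianWeight_of_mem hcd, ← ENNReal.ofReal_mul (Real.exp_nonneg _), ← Real.exp_add,
      asianLogWeight_add_asianLogWeight hp hcd]
  · rw [asianWeight_of_notMem hcd,
      asianWeight_of_notMem (mt (asianTransform_mem_asianDomain hp).1 hcd), mul_zero]

theorem lintegral_asianPush (c : ℝ) (μ : Measure (ℝ × ℝ)) {F : ℝ × ℝ → ℝ≥0∞}
    (hF : Measurable F) :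
    ∫⁻ q, F q ∂(asianPush c μ) = ∫⁻ p, asianWeight c p * F (asianTransform c p) ∂μ := by
  rw [asianPush, lintegral_map hF (by fun_prop),
    lintegral_withDensity_eq_lintegral_mul _ (by fun_prop) (by fun_prop)]
  rfl

theorem asianPush_mono (c : ℝ) {μ ν : Measure (ℝ × ℝ)} (hμν : μ ≤ ν) :
    asianPush c μ ≤ asianPush c ν := by
  refine Measure.le_iff.2 fun s hs => ?_
  rw [← lintegral_indicator_one hs, ← lintegral_indicator_one hs,
    lintegral_asianPush c μ (by fun_prop (disch := exact hs)),
    lintegral_asianPush c ν (by fun_prop (disch := exact hs))]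
  exact lintegral_mono' hμν le_rfl

theorem asianPush_restrict_asianDomain (c : ℝ) (μ : Measure (ℝ × ℝ)) :
    (asianPush c μ).restrict (asianDomain (-c)) = asianPush c μ := by
  refine Measure.restrict_eq_self_of_ae_mem ?_
  change asianPush c μ (asianDomain (-c))ᶜ = 0
  rw [asianPush, Measure.map_apply (by fun_prop) (measurableSet_asianDomain _).compl,
    withDensity_apply_eq_zero' (by fun_prop)]
  convert measure_empty (μ := μ)
  refine eq_empty_of_forall_notMem fun p ⟨hw, hp⟩ => hp ?_
  have hpc : p ∈ asianDomain c := of_not_not fun h => hw (asianWeight_of_notMem h)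
  exact (asianTransform_mem_asianDomain hpc).2 (by simp [asianDomain])

theorem asianPush_asianPush_neg (c : ℝ) (μ : Measure (ℝ × ℝ)) :
    asianPush c (asianPush (-c) μ) = μ.restrict (asianDomain (-c)) := by
  ext s hs
  have hF : Measurable fun p => asianWeight c p * s.indicator 1 (asianTransform c p) :=
    (measurable_asianWeight c).mul ((measurable_one.indicator hs).comp (by fun_prop))
  rw [← lintegral_indicator_one hs, lintegral_asianPush c _ (measurable_one.indicator hs),
    lintegral_asianPush (-c) μ hF, ← lintegral_indicator_one hs,
    ← lintegral_indicator (measurableSet_asianDomain _)]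
  refine lintegral_congr fun p => ?_
  by_cases hp : p ∈ asianDomain (-c)
  · rw [indicator_of_mem hp, asianTransform_asianTransform hp, ← mul_assoc,
      asianWeight_mul_asianWeight hp, neg_add_cancel, asianWeight_zero, asianTransform_zero,
      one_mul]
  · rw [indicator_of_notMem hp, asianWeight_of_notMem hp, zero_mul]

-- The inequality for `-c` upgrades the inequality for `c` to an equality.
theorem asianPush_eq_restrict {μ : Measure (ℝ × ℝ)} (h : ∀ c, asianPush c μ ≤ μ) (c : ℝ) :
    asianPush c μ = μ.restrict (asianDomain (-c)) := by
  refine le_antisymm ?_ ?_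
  · rw [← asianPush_restrict_asianDomain]
    exact Measure.restrict_mono_measure (h c) _
  · rw [← asianPush_asianPush_neg]
    exact asianPush_mono c (h (-c))

/-! ### One Gaussian step -/

/-- One step of mesh `δ` of a discretisation of `(M, A)` driven by the Gaussian increment `z`. The
rectangle has the geometric mean of the two endpoints as its height: with this choice the
discretisation is exactly equivariant under `asianTransform`. -/
def asianStep (δ : ℝ) (p : ℝ × ℝ) (z : ℝ) : ℝ × ℝ :=
  (p.1 * Real.exp (z - δ / 2), p.2 + δ * (p.1 * Real.exp ((z - δ / 2) / 2)))

/-- The logarithmic increment of `1 + c a` along a step. -/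
def logGrowth (c δ : ℝ) (p : ℝ × ℝ) (z : ℝ) : ℝ :=
  Real.log ((1 + c * (asianStep δ p z).2) / (1 + c * p.2))

/-- The increment that drives the step from `asianTransform c p` to
`asianTransform c (asianStep δ p z)`. -/
def transformedNoise (c δ : ℝ) (p : ℝ × ℝ) (z : ℝ) : ℝ :=
  z - 2 * logGrowth c δ p z

/-- The logarithm of the density that turns the law of `transformedNoise` under `N(0, δ)` back
into `N(0, δ)`. -/
def stepLogDensity (c δ : ℝ) (p : ℝ × ℝ) (z : ℝ) : ℝ :=
  2 / δ * (logGrowth c δ p z * (z - δ / 2 - logGrowth c δ p z))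

/-- The density with logarithm `stepLogDensity`, set to zero when the step leaves
`asianDomain c`. -/
def stepDensity (c δ : ℝ) (p : ℝ × ℝ) (z : ℝ) : ℝ≥0∞ :=
  (asianDomain c).indicator (fun _ => ENNReal.ofReal (Real.exp (stepLogDensity c δ p z)))
    (asianStep δ p z)

theorem stepDensity_of_mem {c δ z : ℝ} {p : ℝ × ℝ} (hq : asianStep δ p z ∈ asianDomain c) :
    stepDensity c δ p z = ENNReal.ofReal (Real.exp (stepLogDensity c δ p z)) :=
  indicator_of_mem hq _

theorem stepDensity_of_notMem {c δ z : ℝ} {p : ℝ × ℝ} (hq : asianStep δ p z ∉ asianDomain c) :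
    stepDensity c δ p z = 0 :=
  indicator_of_notMem hq _

section Measurability

variable {α : Type*} [MeasurableSpace α] {X : α → ℝ × ℝ} {Z : α → ℝ}

@[fun_prop]
theorem measurable_asianStep_comp (δ : ℝ) (hX : Measurable X) (hZ : Measurable Z) :
    Measurable fun x => asianStep δ (X x) (Z x) := by
  unfold asianStep
  fun_prop

@[fun_prop]
theorem measurable_stepDensity_comp (c δ : ℝ) (hX : Measurable X) (hZ : Measurable Z) :
    Measurable fun x => stepDensity c δ (X x) (Z x) := by
  have hL : Measurable fun x => stepLogDensity c δ (X x) (Z x) := by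
    unfold stepLogDensity logGrowth
    fun_prop
  exact hL.exp.ennreal_ofReal.indicator
    ((measurable_asianStep_comp δ hX hZ) (measurableSet_asianDomain c))

end Measurability

section Step

variable {c δ : ℝ} {p : ℝ × ℝ}

theorem exp_logGrowth {z : ℝ} (hp : p ∈ asianDomain c) (hq : asianStep δ p z ∈ asianDomain c) :
    Real.exp (logGrowth c δ p z) = (1 + c * (asianStep δ p z).2) / (1 + c * p.2) :=
  Real.exp_log (div_pos hq hp)

theorem asianStep_asianTransform {z : ℝ} (hp : p ∈ asianDomain c)
    (hq : asianStep δ p z ∈ asianDomain c) :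
    asianStep δ (asianTransform c p) (transformedNoise c δ p z) =
      asianTransform c (asianStep δ p z) := by
  have hu : 1 + c * p.2 ≠ 0 := ne_of_gt hp
  have hv : 1 + c * (asianStep δ p z).2 ≠ 0 := ne_of_gt hq
  have hε := exp_logGrowth hp hq
  have hfst : Real.exp (transformedNoise c δ p z - δ / 2) =
      Real.exp (z - δ / 2) / Real.exp (logGrowth c δ p z) ^ 2 := by
    rw [transformedNoise, ← Real.exp_nat_mul, ← Real.exp_sub]
    push_cast
    ring_nf
  have hsnd : Real.exp ((transformedNoise c δ p z - δ / 2) / 2) =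
      Real.exp ((z - δ / 2) / 2) / Real.exp (logGrowth c δ p z) := by
    rw [transformedNoise, ← Real.exp_sub]
    ring_nf
  rw [asianStep, hfst, hsnd, hε]
  refine Prod.ext ?_ ?_
  · simp only [asianTransform]
    rw [show (asianStep δ p z).1 = p.1 * Real.exp (z - δ / 2) from rfl]
    field_simp
  · have hstep : (asianStep δ p z).2 = p.2 + δ * (p.1 * Real.exp ((z - δ / 2) / 2)) := rfl
    simp only [asianTransform]
    rw [div_add' _ _ _ hu, div_eq_div_iff hu hv]
    have hcancel : δ * (p.1 / (1 + c * p.2) ^ 2 * (Real.exp ((z - δ / 2) / 2) /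
        ((1 + c * (asianStep δ p z).2) / (1 + c * p.2)))) * (1 + c * p.2) *
        (1 + c * (asianStep δ p z).2) = δ * (p.1 * Real.exp ((z - δ / 2) / 2)) := by
      field_simp
    linear_combination hcancel - hstep

theorem hasDerivAt_transformedNoise {z : ℝ} (hp : p ∈ asianDomain c)
    (hq : asianStep δ p z ∈ asianDomain c) :
    HasDerivAt (transformedNoise c δ p) ((1 + c * p.2) / (1 + c * (asianStep δ p z).2)) z := by
  have hu : 1 + c * p.2 ≠ 0 := ne_of_gt hp
  have hv : 1 + c * (asianStep δ p z).2 ≠ 0 := ne_of_gt hq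
  have hexp : HasDerivAt (fun w => Real.exp ((w - δ / 2) / 2))
      (Real.exp ((z - δ / 2) / 2) * (1 / 2)) z :=
    (((hasDerivAt_id z).sub_const (δ / 2)).div_const 2).exp
  have hgrow : HasDerivAt (fun w => (1 + c * (asianStep δ p w).2) / (1 + c * p.2))
      (c * (δ * (p.1 * (Real.exp ((z - δ / 2) / 2) * (1 / 2)))) / (1 + c * p.2)) z :=
    ((((hexp.const_mul p.1).const_mul δ).const_add p.2).const_mul c |>.const_add 1).div_const _
  refine ((hasDerivAt_id z).sub ((hgrow.log (div_ne_zero hv hu)).const_mul 2)).congr_deriv ?_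
  have hstep : (asianStep δ p z).2 = p.2 + δ * (p.1 * Real.exp ((z - δ / 2) / 2)) := rfl
  generalize (asianStep δ p z).2 = a' at hv hstep ⊢
  generalize Real.exp ((z - δ / 2) / 2) = r at hstep ⊢
  field_simp
  rw [hstep]
  ring

-- In the variable `exp (-z / 2)` the map `transformedNoise` is a translation.
theorem exp_neg_half_transformedNoise {z : ℝ} (hp : p ∈ asianDomain c)
    (hq : asianStep δ p z ∈ asianDomain c) :
    Real.exp (-transformedNoise c δ p z / 2) =
      Real.exp (-z / 2) + c * δ * p.1 * Real.exp (-δ / 4) / (1 + c * p.2) := by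
  have hu : 1 + c * p.2 ≠ 0 := ne_of_gt hp
  have hsplit : Real.exp (-δ / 4) = Real.exp (-z / 2) * Real.exp ((z - δ / 2) / 2) := by
    rw [← Real.exp_add]
    ring_nf
  rw [transformedNoise, show -(z - 2 * logGrowth c δ p z) / 2 = -z / 2 + logGrowth c δ p z by ring,
    Real.exp_add, exp_logGrowth hp hq, hsplit]
  simp only [asianStep]
  field_simp
  ring

theorem injOn_transformedNoise (hp : p ∈ asianDomain c) :
    InjOn (transformedNoise c δ p) (asianStep δ p ⁻¹' asianDomain c) := by
  intro z hz w hw hzw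
  have h := exp_neg_half_transformedNoise hp hz
  rw [hzw, exp_neg_half_transformedNoise hp hw, add_left_inj, Real.exp_eq_exp] at h
  linarith

theorem gaussianPDF_mul_stepDensity (hδ : 0 < δ) {z : ℝ} (hp : p ∈ asianDomain c)
    (hq : asianStep δ p z ∈ asianDomain c) :
    gaussianPDF 0 δ.toNNReal z * stepDensity c δ p z =
      ENNReal.ofReal |(1 + c * p.2) / (1 + c * (asianStep δ p z).2)| *
        gaussianPDF 0 δ.toNNReal (transformedNoise c δ p z) := by
  have hjac : (1 + c * p.2) / (1 + c * (asianStep δ p z).2) =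
      Real.exp (-logGrowth c δ p z) := by
    rw [Real.exp_neg, exp_logGrowth hp hq, inv_div]
  rw [stepDensity_of_mem hq, hjac, abs_of_pos (Real.exp_pos _), gaussianPDF, gaussianPDF,
    ← ENNReal.ofReal_mul (gaussianPDFReal_nonneg _ _ _), ← ENNReal.ofReal_mul (Real.exp_nonneg _)]
  congr 1
  simp only [gaussianPDFReal, Real.coe_toNNReal δ hδ.le, sub_zero]
  rw [mul_assoc, ← Real.exp_add, mul_left_comm, ← Real.exp_add, stepLogDensity, transformedNoise]
  congr 2
  field_simp
  ring

theorem lintegral_stepDensity_mul_le (hδ : 0 < δ) (hp : p ∈ asianDomain c)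
    {V : ℝ × ℝ → ℝ≥0∞} (hV : Measurable V) :
    ∫⁻ z, stepDensity c δ p z * V (asianTransform c (asianStep δ p z))
        ∂(gaussianReal 0 δ.toNNReal) ≤
      ∫⁻ z, V (asianStep δ (asianTransform c p) z) ∂(gaussianReal 0 δ.toNNReal) := by
  have hs : MeasurableSet (asianStep δ p ⁻¹' asianDomain c) :=
    (measurable_asianStep_comp δ measurable_const measurable_id) (measurableSet_asianDomain c)
  rw [gaussianReal_of_var_ne_zero _ (Real.toNNReal_pos.2 hδ).ne',
    lintegral_withDensity_eq_lintegral_mul _ (by fun_prop) (by fun_prop),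
    lintegral_withDensity_eq_lintegral_mul _ (by fun_prop) (by fun_prop)]
  set g : ℝ → ℝ≥0∞ := gaussianPDF 0 δ.toNNReal
  calc ∫⁻ z, g z * (stepDensity c δ p z * V (asianTransform c (asianStep δ p z)))
      = ∫⁻ z in asianStep δ p ⁻¹' asianDomain c,
          ENNReal.ofReal |(1 + c * p.2) / (1 + c * (asianStep δ p z).2)| *
          (g (transformedNoise c δ p z) *
            V (asianStep δ (asianTransform c p) (transformedNoise c δ p z))) := by
        rw [← lintegral_indicator hs]
        refine lintegral_congr fun z => ?_
        by_cases hq : z ∈ asianStep δ p ⁻¹' asianDomain c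
        · rw [indicator_of_mem hq, ← mul_assoc, gaussianPDF_mul_stepDensity hδ hp hq,
            asianStep_asianTransform hp hq, mul_assoc]
        · rw [indicator_of_notMem hq, stepDensity_of_notMem hq, zero_mul, mul_zero]
    _ = ∫⁻ w in transformedNoise c δ p '' (asianStep δ p ⁻¹' asianDomain c),
          g w * V (asianStep δ (asianTransform c p) w) :=
        (lintegral_image_eq_lintegral_abs_deriv_mul hs
          (fun z hz => (hasDerivAt_transformedNoise hp hz).hasDerivWithinAt)
          (injOn_transformedNoise hp)
          fun w => g w * V (asianStep δ (asianTransform c p) w)).symm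
    _ ≤ ∫⁻ w, g w * V (asianStep δ (asianTransform c p) w) := setLIntegral_le_lintegral _ _

end Step

/-! ### The discrete chain -/

/-- The state after `k` steps of mesh `δ`, started at `(M 0, A 0) = (1, 0)` and driven by the
increments `z`. -/
def asianChain (δ : ℝ) (z : ℕ → ℝ) : ℕ → ℝ × ℝ
  | 0 => (1, 0)
  | k + 1 => asianStep δ (asianChain δ z k) (z k)

/-- The product of the densities of the first `n` steps of the chain, a discrete counterpart of
`asianWeight c`. -/
def chainDensity (c δ : ℝ) (z : ℕ → ℝ) (n : ℕ) : ℝ≥0∞ :=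
  ∏ k ∈ Finset.range n, stepDensity c δ (asianChain δ z k) (z k)

theorem asianChain_zero_mem_asianDomain (c δ : ℝ) (z : ℕ → ℝ) :
    asianChain δ z 0 ∈ asianDomain c := by
  simp [asianChain, asianDomain]

theorem chainDensity_succ (c δ : ℝ) (z : ℕ → ℝ) (n : ℕ) :
    chainDensity c δ z (n + 1) =
      chainDensity c δ z n * stepDensity c δ (asianChain δ z n) (z n) :=
  Finset.prod_range_succ _ _

theorem chainDensity_of_notMem {c δ : ℝ} {z : ℕ → ℝ} {n : ℕ}
    (h : asianChain δ z n ∉ asianDomain c) : chainDensity c δ z n = 0 := by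
  cases n with
  | zero => exact absurd (asianChain_zero_mem_asianDomain c δ z) h
  | succ n => rw [chainDensity_succ, stepDensity_of_notMem h, mul_zero]

theorem measurable_asianChain {Ω : Type*} {m : ℕ → MeasurableSpace Ω} (hm : Monotone m) (δ : ℝ)
    {Z : ℕ → Ω → ℝ} (hZ : ∀ k, Measurable[m (k + 1)] (Z k)) (n : ℕ) :
    Measurable[m n] fun ω => asianChain δ (fun k => Z k ω) n := by
  induction n with
  | zero => exact @measurable_const _ _ _ (m 0) _
  | succ n ih =>
    let _ := m (n + 1)
    exact measurable_asianStep_comp δ (ih.mono (hm n.le_succ) le_rfl) (hZ n)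

theorem measurable_chainDensity {Ω : Type*} {m : ℕ → MeasurableSpace Ω} (hm : Monotone m)
    (c δ : ℝ) {Z : ℕ → Ω → ℝ} (hZ : ∀ k, Measurable[m (k + 1)] (Z k)) (n : ℕ) :
    Measurable[m n] fun ω => chainDensity c δ (fun k => Z k ω) n := by
  let _ := m n
  refine Finset.measurable_fun_prod _ fun k hk => ?_
  have hkn : k < n := Finset.mem_range.1 hk
  exact measurable_stepDensity_comp c δ
    ((measurable_asianChain hm δ hZ k).mono (hm hkn.le) le_rfl) ((hZ k).mono (hm hkn) le_rfl)

section Chain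

variable {Ω : Type*} [MeasurableSpace Ω] {μ : Measure Ω} {δ : ℝ} {Z : ℕ → Ω → ℝ}

theorem indepFun_asianChain_chainDensity (hZm : ∀ k, Measurable (Z k)) (hZ : iIndepFun Z μ)
    (c δ : ℝ) (n : ℕ) :
    IndepFun (fun ω => (asianChain δ (fun k => Z k ω) n, chainDensity c δ (fun k => Z k ω) n))
      (Z n) μ := by
  have hm : Monotone fun n => ⨆ k ∈ Iio n, MeasurableSpace.comap (Z k) inferInstance :=
    fun i j hij => biSup_mono fun k hk => lt_of_lt_of_le hk hij
  have hZk : ∀ k, Measurable[⨆ j ∈ Iio (k + 1), MeasurableSpace.comap (Z j) inferInstance] (Z k) :=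
    fun k => (comap_measurable (Z k)).mono (le_iSup₂_of_le k k.lt_succ_self le_rfl) le_rfl
  exact indepFun_of_measurable_iSup_comap hZm hZ
    ((measurable_asianChain hm δ hZk n).prodMk (measurable_chainDensity hm c δ hZk n))

theorem lintegral_chainDensity_mul_le [IsFiniteMeasure μ] (hδ : 0 < δ)
    (hZm : ∀ k, Measurable (Z k)) (hZ : iIndepFun Z μ)
    (hZl : ∀ k, μ.map (Z k) = gaussianReal 0 δ.toNNReal) (c : ℝ)
    (n : ℕ) {V : ℝ × ℝ → ℝ≥0∞} (hV : Measurable V) :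
    ∫⁻ ω, chainDensity c δ (fun k => Z k ω) n *
        V (asianTransform c (asianChain δ (fun k => Z k ω) n)) ∂μ ≤
      ∫⁻ ω, V (asianChain δ (fun k => Z k ω) n) ∂μ := by
  induction n generalizing V with
  | zero => simp [asianChain, chainDensity, asianTransform]
  | succ n ih =>
    have hX : Measurable fun ω =>
        (asianChain δ (fun k => Z k ω) n, chainDensity c δ (fun k => Z k ω) n) :=
      (measurable_asianChain monotone_const δ hZm n).prodMk
        (measurable_chainDensity monotone_const c δ hZm n)
    have hXZ := indepFun_asianChain_chainDensity hZm hZ c δ n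
    have hleft := lintegral_comp_prodMk_of_indepFun hX (hZm n) hXZ
      (F := fun r => r.1.2 * stepDensity c δ r.1.1 r.2 *
        V (asianTransform c (asianStep δ r.1.1 r.2))) (by fun_prop)
    have hright := lintegral_comp_prodMk_of_indepFun hX (hZm n) hXZ
      (F := fun r => V (asianStep δ r.1.1 r.2)) (by fun_prop)
    have hVstep : Measurable fun q => ∫⁻ z, V (asianStep δ q z) ∂(gaussianReal 0 δ.toNNReal) :=
      Measurable.lintegral_prod_right' (f := fun r : (ℝ × ℝ) × ℝ => V (asianStep δ r.1 r.2))
        (by fun_prop)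
    simp only [hZl] at hleft hright
    simp only [asianChain, chainDensity_succ]
    rw [hleft, hright]
    refine le_trans (lintegral_mono fun ω => ?_) (ih hVstep)
    by_cases hp : asianChain δ (fun k => Z k ω) n ∈ asianDomain c
    · simp_rw [mul_assoc]
      rw [lintegral_const_mul _ (by fun_prop)]
      exact mul_le_mul_right (lintegral_stepDensity_mul_le hδ hp hV) _
    · simp [chainDensity_of_notMem hp]

end Chain

/-! ### Convergence of the discrete densities -/

theorem stepLogDensity_eq (c δ : ℝ) (p : ℝ × ℝ) (z : ℝ) :
    stepLogDensity c δ p z =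
      8 / δ * (logGrowth c δ p z / 2 * ((z - δ / 2 - logGrowth c δ p z) / 2)) := by
  rw [stepLogDensity]
  ring

theorem asianLogWeight_asianStep_sub {c δ z : ℝ} {p : ℝ × ℝ} (hδ : δ ≠ 0)
    (hp : p ∈ asianDomain c) (hq : asianStep δ p z ∈ asianDomain c) :
    asianLogWeight c (asianStep δ p z) - asianLogWeight c p =
      8 / δ * (Real.sinh (logGrowth c δ p z / 2) *
        Real.sinh ((z - δ / 2 - logGrowth c δ p z) / 2)) := by
  have hu : 1 + c * p.2 ≠ 0 := ne_of_gt hp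
  set a := Real.exp (logGrowth c δ p z / 2) with ha
  set b := Real.exp ((z - δ / 2 - logGrowth c δ p z) / 2) with hb
  have ha0 : a ≠ 0 := Real.exp_ne_zero _
  have hb0 : b ≠ 0 := Real.exp_ne_zero _
  have hab : Real.exp ((z - δ / 2) / 2) = a * b := by
    rw [ha, hb, ← Real.exp_add]
    ring_nf
  have hab2 : Real.exp (z - δ / 2) = (a * b) ^ 2 := by
    rw [← hab, ← Real.exp_nat_mul]
    push_cast
    ring_nf
  have hv : 1 + c * (asianStep δ p z).2 = (1 + c * p.2) * a ^ 2 := by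
    rw [ha, ← Real.exp_nat_mul, Nat.cast_ofNat, mul_div_cancel₀ _ two_ne_zero,
      exp_logGrowth hp hq, mul_div_cancel₀ _ hu]
  have hgrowth : c * δ * p.1 * (a * b) = (1 + c * p.2) * (a ^ 2 - 1) := by
    rw [asianStep, hab] at hv
    linear_combination hv
  simp only [asianLogWeight, hv, Real.sinh_eq, Real.exp_neg, ← ha, ← hb]
  rw [asianStep, hab2]
  generalize 1 + c * p.2 = u at hu hgrowth ⊢
  field_simp
  linear_combination 8 * (b ^ 2 - 1) * hgrowth

theorem abs_stepLogDensity_sub_le {c δ z C : ℝ} {p : ℝ × ℝ} (hδ : 0 < δ)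
    (hp : p ∈ asianDomain c) (hq : asianStep δ p z ∈ asianDomain c) (hz : |z| ≤ 1)
    (hC : 1 / 2 ≤ C) (hCδ : 2 * C * δ ≤ 1) (hε : |logGrowth c δ p z| ≤ C * δ) :
    |stepLogDensity c δ p z - (asianLogWeight c (asianStep δ p z) - asianLogWeight c p)| ≤
      4 * C * (|z| ^ 3 + (3 * C * δ) ^ 3) := by
  rw [stepLogDensity_eq, asianLogWeight_asianStep_sub hδ.ne' hp hq, ← mul_sub, abs_mul,
    abs_of_pos (by positivity : 0 < 8 / δ)]
  generalize logGrowth c δ p z = ε at hε ⊢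
  have hδC : δ / 2 ≤ C * δ := by nlinarith
  have hΔ : |z - δ / 2 - ε| ≤ |z| + 2 * C * δ :=
    calc |z - δ / 2 - ε| ≤ |z - δ / 2| + |ε| := abs_sub _ _
      _ ≤ |z| + |δ / 2| + |ε| := by gcongr; exact abs_sub _ _
      _ ≤ |z| + 2 * C * δ := by rw [abs_of_pos (half_pos hδ)]; linarith
  have hC0 : 0 ≤ C := by linarith
  have hratio : |ε| / δ ≤ C := (div_le_iff₀ hδ).2 hε
  have hsum : |ε| + |z - δ / 2 - ε| ≤ |z| + 3 * C * δ := by linarith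
  have habs_half : ∀ x : ℝ, |x / 2| = |x| / 2 := fun x => by rw [abs_div, Nat.abs_ofNat]
  have hsinh := abs_mul_sub_sinh_mul_sinh_le (x := ε / 2) (y := (z - δ / 2 - ε) / 2)
    (by rw [habs_half]; linarith) (by rw [habs_half]; linarith)
  rw [habs_half, habs_half] at hsinh
  calc 8 / δ * |ε / 2 * ((z - δ / 2 - ε) / 2) -
        Real.sinh (ε / 2) * Real.sinh ((z - δ / 2 - ε) / 2)|
      ≤ 8 / δ * (2 * (|ε| / 2) * (|ε| / 2 + |z - δ / 2 - ε| / 2) ^ 3) := by gcongr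
    _ = |ε| / δ * (|ε| + |z - δ / 2 - ε|) ^ 3 := by ring
    _ ≤ C * (|z| + 3 * C * δ) ^ 3 := by
        refine mul_le_mul hratio (pow_le_pow_left₀ (by positivity) hsum 3) ?_ hC0
        positivity
    _ ≤ C * (2 ^ (3 - 1) * (|z| ^ 3 + (3 * C * δ) ^ 3)) := by
        gcongr
        exact add_pow_le (abs_nonneg z) (by positivity) 3
    _ = 4 * C * (|z| ^ 3 + (3 * C * δ) ^ 3) := by ring

theorem abs_logGrowth_le {c δ z K l : ℝ} {p : ℝ × ℝ} (hδ : 0 ≤ δ) (hl : 0 < l) (hp0 : 0 ≤ p.1)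
    (hpK : p.1 ≤ K) (hqK : (asianStep δ p z).1 ≤ K) (hp : l ≤ 1 + c * p.2)
    (hq : l ≤ 1 + c * (asianStep δ p z).2) :
    |logGrowth c δ p z| ≤ |c| * K / l * δ := by
  have hmid0 : 0 ≤ p.1 * Real.exp ((z - δ / 2) / 2) := mul_nonneg hp0 (Real.exp_nonneg _)
  have hmid : p.1 * Real.exp ((z - δ / 2) / 2) ≤ K :=
    (mul_exp_half_mem_uIcc hp0 (z - δ / 2)).2.trans (max_le hpK hqK)
  calc |logGrowth c δ p z|
      ≤ |1 + c * (asianStep δ p z).2 - (1 + c * p.2)| / l := abs_log_div_le hl hp hq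
    _ = |c| * (p.1 * Real.exp ((z - δ / 2) / 2)) / l * δ := by
        have hdiff : 1 + c * (asianStep δ p z).2 - (1 + c * p.2) =
            c * (p.1 * Real.exp ((z - δ / 2) / 2)) * δ := by
          simp only [asianStep]
          ring
        rw [hdiff, abs_mul, abs_mul, abs_of_nonneg hδ, abs_of_nonneg hmid0]
        ring
    _ ≤ |c| * K / l * δ := by gcongr

theorem asianChain_fst_pos (δ : ℝ) (z : ℕ → ℝ) (k : ℕ) : 0 < (asianChain δ z k).1 := by
  induction k with
  | zero => exact one_pos
  | succ k ih => exact mul_pos ih (Real.exp_pos _)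

theorem asianChain_snd_mono {δ : ℝ} (hδ : 0 ≤ δ) (z : ℕ → ℝ) :
    Monotone fun k => (asianChain δ z k).2 :=
  monotone_nat_of_le_succ fun k => le_add_of_nonneg_right
    (mul_nonneg hδ (mul_pos (asianChain_fst_pos δ z k) (Real.exp_pos _)).le)

theorem le_one_add_mul_asianChain_snd {c δ l : ℝ} {z : ℕ → ℝ} {n k : ℕ} (hδ : 0 ≤ δ) (hl : l ≤ 1)
    (hn : l ≤ 1 + c * (asianChain δ z n).2) (hk : k ≤ n) :
    l ≤ 1 + c * (asianChain δ z k).2 := by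
  have h0 : 0 ≤ (asianChain δ z k).2 := asianChain_snd_mono hδ z k.zero_le
  have hkn : (asianChain δ z k).2 ≤ (asianChain δ z n).2 := asianChain_snd_mono hδ z hk
  rcases le_total 0 c with hc | hc <;> nlinarith

theorem chainDensity_eq_ofReal_exp {c δ : ℝ} {z : ℕ → ℝ} {n : ℕ}
    (h : ∀ k ≤ n, asianChain δ z k ∈ asianDomain c) :
    chainDensity c δ z n = ENNReal.ofReal
      (Real.exp (∑ k ∈ Finset.range n, stepLogDensity c δ (asianChain δ z k) (z k))) := by
  rw [Real.exp_sum, ENNReal.ofReal_prod_of_nonneg fun _ _ => Real.exp_nonneg _]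
  exact Finset.prod_congr rfl fun k hk =>
    stepDensity_of_mem (h (k + 1) (Finset.mem_range.1 hk))

theorem abs_sum_stepLogDensity_sub_le {c δ C K l : ℝ} {z : ℕ → ℝ} {n : ℕ} (hδ : 0 < δ)
    (hl : 0 < l) (hl1 : l ≤ 1) (hn : l ≤ 1 + c * (asianChain δ z n).2)
    (hK : ∀ k ≤ n, (asianChain δ z k).1 ≤ K) (hC : 1 / 2 ≤ C) (hKC : |c| * K / l ≤ C)
    (hCδ : 2 * C * δ ≤ 1) (hz : ∀ k < n, |z k| ≤ 1) :
    |∑ k ∈ Finset.range n, stepLogDensity c δ (asianChain δ z k) (z k) -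
        asianLogWeight c (asianChain δ z n)| ≤
      4 * C * (∑ k ∈ Finset.range n, |z k| ^ 3 + n * (3 * C * δ) ^ 3) := by
  have hlow : ∀ k ≤ n, l ≤ 1 + c * (asianChain δ z k).2 := fun k =>
    le_one_add_mul_asianChain_snd hδ.le hl1 hn
  have hdom : ∀ k ≤ n, asianChain δ z k ∈ asianDomain c := fun k hk => hl.trans_le (hlow k hk)
  have hzero : asianLogWeight c (asianChain δ z 0) = 0 := by simp [asianLogWeight, asianChain]
  have htelescope := Finset.sum_range_sub (fun k => asianLogWeight c (asianChain δ z k)) n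
  rw [hzero, sub_zero] at htelescope
  rw [← htelescope, ← Finset.sum_sub_distrib]
  refine (Finset.abs_sum_le_sum_abs _ _).trans ?_
  calc ∑ k ∈ Finset.range n, |stepLogDensity c δ (asianChain δ z k) (z k) -
        (asianLogWeight c (asianChain δ z (k + 1)) - asianLogWeight c (asianChain δ z k))|
      ≤ ∑ k ∈ Finset.range n, 4 * C * (|z k| ^ 3 + (3 * C * δ) ^ 3) := by
        refine Finset.sum_le_sum fun k hk => ?_
        have hk : k < n := Finset.mem_range.1 hk
        refine abs_stepLogDensity_sub_le hδ (hdom k hk.le) (hdom (k + 1) hk) (hz k hk) hC hCδ ?_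
        refine (abs_logGrowth_le hδ.le hl (asianChain_fst_pos δ z k).le (hK k hk.le)
          (hK (k + 1) hk) (hlow k hk.le) (hlow (k + 1) hk)).trans ?_
        gcongr
    _ = 4 * C * (∑ k ∈ Finset.range n, |z k| ^ 3 + n * (3 * C * δ) ^ 3) := by
        rw [← Finset.mul_sum, Finset.sum_add_distrib, Finset.sum_const, Finset.card_range,
          nsmul_eq_mul]

theorem continuousAt_asianTransform {c : ℝ} {p : ℝ × ℝ} (hp : p ∈ asianDomain c) :
    ContinuousAt (asianTransform c) p := by
  have hp0 : 1 + c * p.2 ≠ 0 := ne_of_gt hp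
  unfold asianTransform
  fun_prop (disch := simpa using hp0)

theorem continuousAt_asianLogWeight {c : ℝ} {p : ℝ × ℝ} (hp : p ∈ asianDomain c) :
    ContinuousAt (asianLogWeight c) p := by
  have hp0 : 1 + c * p.2 ≠ 0 := ne_of_gt hp
  unfold asianLogWeight
  fun_prop (disch := exact hp0)

theorem tendsto_sum_stepLogDensity_sub {ι : Type*} {f : Filter ι} {c K l : ℝ} {δ : ι → ℝ}
    {z : ι → ℕ → ℝ} {n : ι → ℕ} (hδ0 : ∀ᶠ i in f, 0 < δ i) (hδ : Tendsto δ f (𝓝 0))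
    (hnδ : Tendsto (fun i => n i * δ i ^ 3) f (𝓝 0))
    (hz : Tendsto (fun i => ∑ k ∈ Finset.range (n i), |z i k| ^ 3) f (𝓝 0))
    (hK : ∀ᶠ i in f, ∀ k ≤ n i, (asianChain (δ i) (z i) k).1 ≤ K) (hl : 0 < l) (hl1 : l ≤ 1)
    (hlow : ∀ᶠ i in f, l ≤ 1 + c * (asianChain (δ i) (z i) (n i)).2) :
    Tendsto (fun i => ∑ k ∈ Finset.range (n i),
      stepLogDensity c (δ i) (asianChain (δ i) (z i) k) (z i k) -
        asianLogWeight c (asianChain (δ i) (z i) (n i))) f (𝓝 0) := by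
  set C := max (1 / 2) (|c| * K / l)
  have hCδ : ∀ᶠ i in f, 2 * C * δ i ≤ 1 :=
    (hδ.const_mul (2 * C)).eventually_le_const (by rw [mul_zero]; exact one_pos)
  have hz1 : ∀ᶠ i in f, ∀ k < n i, |z i k| ≤ 1 := by
    filter_upwards [hz.eventually_le_const one_pos] with i hi k hk
    exact (pow_le_one_iff_of_nonneg (abs_nonneg _) three_ne_zero).1
      ((Finset.single_le_sum (f := fun k => |z i k| ^ 3) (fun _ _ => by positivity)
        (Finset.mem_range.2 hk)).trans hi)
  have herror : Tendsto (fun i =>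
      4 * C * (∑ k ∈ Finset.range (n i), |z i k| ^ 3 + n i * (3 * C * δ i) ^ 3)) f (𝓝 0) := by
    have h := (hz.add (hnδ.const_mul ((3 * C) ^ 3))).const_mul (4 * C)
    rw [mul_zero, add_zero, mul_zero] at h
    refine h.congr fun i => ?_
    ring
  refine squeeze_zero_norm' ?_ herror
  filter_upwards [hδ0, hlow, hK, hCδ, hz1] with i hi hlow hK hCδ hz1
  exact abs_sum_stepLogDensity_sub_le hi hl hl1 hlow hK (le_max_left _ _) (le_max_right _ _) hCδ hz1

theorem tendsto_chainDensity {ι : Type*} {f : Filter ι} {c K : ℝ} {p : ℝ × ℝ} {δ : ι → ℝ}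
    {z : ι → ℕ → ℝ} {n : ι → ℕ} (hδ0 : ∀ᶠ i in f, 0 < δ i) (hδ : Tendsto δ f (𝓝 0))
    (hnδ : Tendsto (fun i => n i * δ i ^ 3) f (𝓝 0))
    (hz : Tendsto (fun i => ∑ k ∈ Finset.range (n i), |z i k| ^ 3) f (𝓝 0))
    (hK : ∀ᶠ i in f, ∀ k ≤ n i, (asianChain (δ i) (z i) k).1 ≤ K)
    (hchain : Tendsto (fun i => asianChain (δ i) (z i) (n i)) f (𝓝 p)) (hp : p ∈ asianDomain c) :
    Tendsto (fun i => chainDensity c (δ i) (z i) (n i)) f (𝓝 (asianWeight c p)) := by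
  have hp0 : 0 < 1 + c * p.2 := hp
  set l := min 1 ((1 + c * p.2) / 2)
  have hl : 0 < l := lt_min one_pos (half_pos hp0)
  have hl1 : l ≤ 1 := min_le_left _ _
  have hlow : ∀ᶠ i in f, l ≤ 1 + c * (asianChain (δ i) (z i) (n i)).2 :=
    (((continuous_snd.tendsto p).comp hchain).const_mul c |>.const_add 1).eventually_const_le
      ((min_le_right _ _).trans_lt (half_lt_self hp0))
  have hsum := (tendsto_sum_stepLogDensity_sub hδ0 hδ hnδ hz hK hl hl1 hlow).add
    ((continuousAt_asianLogWeight hp).tendsto.comp hchain)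
  rw [zero_add] at hsum
  rw [asianWeight_of_mem hp]
  refine (ENNReal.tendsto_ofReal ((Real.continuous_exp.tendsto _).comp hsum)).congr' ?_
  filter_upwards [hδ0, hlow] with i hi hlow
  rw [chainDensity_eq_ofReal_exp fun k hk =>
    hl.trans_le (le_one_add_mul_asianChain_snd hi.le hl1 hlow hk)]
  simp

theorem asianWeight_mul_le_liminf {ι : Type*} {f : Filter ι} [f.NeBot] {c : ℝ} {p : ℝ × ℝ}
    {X : ι → ℝ × ℝ} {D : ι → ℝ≥0∞} (hX : Tendsto X f (𝓝 p))
    (hD : p ∈ asianDomain c → Tendsto D f (𝓝 (asianWeight c p))) (G : (ℝ × ℝ) →ᵇ ℝ≥0) :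
    asianWeight c p * G (asianTransform c p) ≤
      liminf (fun i => D i * G (asianTransform c (X i))) f := by
  by_cases hp : p ∈ asianDomain c
  · have hG : Tendsto (fun i => (G (asianTransform c (X i)) : ℝ≥0∞)) f
        (𝓝 (G (asianTransform c p))) :=
      ENNReal.tendsto_coe.2
        ((G.continuous.tendsto _).comp ((continuousAt_asianTransform hp).tendsto.comp hX))
    exact (ENNReal.Tendsto.mul (hD hp) (Or.inr ENNReal.coe_ne_top) hG
      (Or.inr (asianWeight_ne_top c p))).liminf_eq.ge
  · simp [asianWeight_of_notMem hp]

theorem asianChain_snd (δ : ℝ) (z : ℕ → ℝ) (n : ℕ) :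
    (asianChain δ z n).2 = ∑ k ∈ Finset.range n,
      δ * ((asianChain δ z k).1 * Real.exp ((z k - δ / 2) / 2)) := by
  induction n with
  | zero => rfl
  | succ n ih => rw [Finset.sum_range_succ, ← ih]; rfl

/-! ### Sampling a Brownian path -/

/-- The increment of the path `s ↦ B s ω` over the `k`-th cell of the grid of mesh `δ`. -/
def gridIncrement {Ω : Type*} (B : ℝ → Ω → ℝ) (δ : ℝ) (ω : Ω) (k : ℕ) : ℝ :=
  B ((k + 1 : ℕ) * δ) ω - B (k * δ) ω

section Path

variable {Ω : Type*} {B : ℝ → Ω → ℝ} {ω : Ω}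

theorem asianChain_gridIncrement_fst (h0 : B 0 ω = 0) (δ : ℝ) (k : ℕ) :
    (asianChain δ (gridIncrement B δ ω) k).1 = M B (k * δ) ω := by
  induction k with
  | zero => simp [asianChain, M, h0]
  | succ k ih =>
    rw [asianChain, asianStep, ih, M, M, ← Real.exp_add, gridIncrement]
    push_cast
    ring_nf

theorem continuous_M (hB : Continuous fun s => B s ω) : Continuous fun s => M B s ω := by
  unfold M
  fun_prop

theorem tendsto_asianChain_gridIncrement (hB : Continuous fun s => B s ω) (h0 : B 0 ω = 0) {t : ℝ}
    (ht : 0 < t) :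
    Tendsto (fun n : ℕ => asianChain (t / n) (gridIncrement B (t / n) ω) n) atTop
      (𝓝 (M B t ω, A B t ω)) := by
  refine (Prod.tendsto_iff _ _).2 ⟨?_, ?_⟩
  · refine tendsto_const_nhds.congr' ?_
    filter_upwards [eventually_ne_atTop 0] with n hn
    rw [asianChain_gridIncrement_fst h0, mul_div_cancel₀ _ (Nat.cast_ne_zero.2 hn)]
  · simp_rw [asianChain_snd]
    refine tendsto_riemannSum (F := fun s => M B s ω) ht (continuous_M hB).continuousOn
      fun n k => ?_
    rw [← asianChain_gridIncrement_fst h0, ← asianChain_gridIncrement_fst h0]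
    exact mul_exp_half_mem_uIcc (asianChain_fst_pos _ _ _).le _

theorem tendsto_chainDensity_gridIncrement (hB : Continuous fun s => B s ω) (h0 : B 0 ω = 0)
    {c t : ℝ} (ht : 0 < t) {ns : ℕ → ℕ} (hns : Tendsto ns atTop atTop)
    (hz : Tendsto (fun i => ∑ k ∈ Finset.range (ns i), |gridIncrement B (t / ns i) ω k| ^ 3) atTop
      (𝓝 0)) (hdom : (M B t ω, A B t ω) ∈ asianDomain c) :
    Tendsto (fun i => chainDensity c (t / ns i) (gridIncrement B (t / ns i) ω) (ns i)) atTop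
      (𝓝 (asianWeight c (M B t ω, A B t ω))) := by
  obtain ⟨K, hK⟩ := (isCompact_Icc (a := 0) (b := t)).bddAbove_image (continuous_M hB).continuousOn
  have hpos : ∀ᶠ i in atTop, 0 < ns i := hns.eventually_gt_atTop 0
  have hδ : Tendsto (fun i => t / (ns i : ℝ)) atTop (𝓝 0) :=
    (tendsto_natCast_atTop_atTop.comp hns).const_div_atTop t
  refine tendsto_chainDensity (K := K) ?_ hδ ?_ hz ?_
    ((tendsto_asianChain_gridIncrement hB h0 ht).comp hns) hdom
  · filter_upwards [hpos] with i hi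
    positivity
  · have h := (hδ.pow 2).const_mul t
    rw [zero_pow two_ne_zero, mul_zero] at h
    refine h.congr' ?_
    filter_upwards [hpos] with i hi
    field_simp
  · filter_upwards [hpos] with i hi k hk
    rw [asianChain_gridIncrement_fst h0]
    refine hK (mem_image_of_mem _ ⟨by positivity, ?_⟩)
    calc (k : ℝ) * (t / ns i) ≤ ns i * (t / ns i) := by gcongr
      _ = t := mul_div_cancel₀ t (Nat.cast_ne_zero.2 hi.ne')

end Path

section Brownian

variable {P B}

theorem measurable_gridIncrement (hB : IsBrownianMotion P B) (δ : ℝ) (k : ℕ) :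
    Measurable fun ω => gridIncrement B δ ω k :=
  (hB.measurable _).sub (hB.measurable _)

theorem map_gridIncrement (hB : IsBrownianMotion P B) {δ : ℝ} (hδ : 0 ≤ δ) (k : ℕ) :
    P.map (fun ω => gridIncrement B δ ω k) = gaussianReal 0 δ.toNNReal := by
  have hcell : ((k + 1 : ℕ) : ℝ) * δ - k * δ = δ := by push_cast; ring
  have h := hB.gaussian_increments (k * δ) ((k + 1 : ℕ) * δ) (by positivity) (by linarith)
  rwa [hcell] at h

theorem iIndepFun_gridIncrement (hB : IsBrownianMotion P B) {δ : ℝ} (hδ : 0 ≤ δ) :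
    iIndepFun (fun k ω => gridIncrement B δ ω k) P :=
  hB.indep_increments (fun k => k * δ) (fun i j hij => by dsimp only; gcongr) (by simp)

theorem eLpNorm_one_sum_abs_gridIncrement_pow (hB : IsBrownianMotion P B) {δ : ℝ} (hδ : 0 ≤ δ)
    (n p : ℕ) :
    eLpNorm (fun ω => ∑ k ∈ Finset.range n, |gridIncrement B δ ω k| ^ p) 1 P =
      ENNReal.ofReal (n * √δ ^ p) * ∫⁻ x, ‖x‖ₑ ^ p ∂(gaussianReal 0 1) := by
  have hmoment : ∀ k, ∫⁻ ω, ‖gridIncrement B δ ω k‖ₑ ^ p ∂P =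
      ENNReal.ofReal (√δ ^ p) * ∫⁻ x, ‖x‖ₑ ^ p ∂(gaussianReal 0 1) := fun k => by
    have h := lintegral_enorm_pow_gaussianReal δ.toNNReal p
    rwa [Real.coe_toNNReal δ hδ, ← map_gridIncrement hB hδ k,
      lintegral_map (by fun_prop) (measurable_gridIncrement hB δ k)] at h
  have henorm : ∀ ω, ‖∑ k ∈ Finset.range n, |gridIncrement B δ ω k| ^ p‖ₑ =
      ∑ k ∈ Finset.range n, ‖gridIncrement B δ ω k‖ₑ ^ p := fun ω => by
    rw [Real.enorm_of_nonneg (by positivity), ENNReal.ofReal_sum_of_nonneg fun _ _ => by positivity]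
    simp only [ENNReal.ofReal_pow (abs_nonneg _), Real.enorm_eq_ofReal_abs]
  rw [eLpNorm_one_eq_lintegral_enorm]
  simp_rw [henorm]
  rw [lintegral_finsetSum _ fun k _ => (measurable_gridIncrement hB δ k).enorm.pow_const p]
  simp_rw [hmoment]
  rw [Finset.sum_const, Finset.card_range, nsmul_eq_mul, ENNReal.ofReal_mul n.cast_nonneg,
    ENNReal.ofReal_natCast, mul_assoc]

theorem tendsto_eLpNorm_sum_abs_gridIncrement_pow_three (hB : IsBrownianMotion P B) {t : ℝ}
    (ht : 0 ≤ t) :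
    Tendsto (fun n : ℕ =>
      eLpNorm (fun ω => ∑ k ∈ Finset.range n, |gridIncrement B (t / n) ω k| ^ 3) 1 P) atTop
      (𝓝 0) := by
  have hδ : ∀ n : ℕ, 0 ≤ t / n := fun n => by positivity
  simp_rw [fun n : ℕ => eLpNorm_one_sum_abs_gridIncrement_pow hB (hδ n) n 3]
  have hlim : Tendsto (fun n : ℕ => (n : ℝ) * √(t / n) ^ 3) atTop (𝓝 0) := by
    have h := (tendsto_const_div_atTop_nhds_zero_nat t).sqrt.const_mul t
    rw [Real.sqrt_zero, mul_zero] at h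
    refine h.congr' ?_
    filter_upwards [eventually_ne_atTop 0] with n hn
    rw [pow_succ, Real.sq_sqrt (hδ n)]
    field_simp
  have h := ENNReal.Tendsto.mul_const (ENNReal.tendsto_ofReal hlim)
    (Or.inr (lintegral_enorm_pow_gaussianReal_ne_top 3 1))
  rwa [ENNReal.ofReal_zero, zero_mul] at h

theorem exists_seq_tendsto_sum_abs_gridIncrement_pow_three (hB : IsBrownianMotion P B) {t : ℝ}
    (ht : 0 ≤ t) :
    ∃ ns : ℕ → ℕ, StrictMono ns ∧ ∀ᵐ ω ∂P,
      Tendsto (fun i => ∑ k ∈ Finset.range (ns i), |gridIncrement B (t / ns i) ω k| ^ 3) atTop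
        (𝓝 0) := by
  have hmeas : ∀ n : ℕ, AEStronglyMeasurable
      (fun ω => ∑ k ∈ Finset.range n, |gridIncrement B (t / n) ω k| ^ 3) P := fun n =>
    (Finset.measurable_fun_sum _ fun k _ =>
      (measurable_gridIncrement hB _ k).abs.pow_const 3).aestronglyMeasurable
  have hlim := tendsto_eLpNorm_sum_abs_gridIncrement_pow_three hB ht
  exact (tendstoInMeasure_of_tendsto_eLpNorm (g := 0) one_ne_zero hmeas aestronglyMeasurable_zero
    (by simpa only [sub_zero] using hlim)).exists_seq_tendsto_ae

theorem measurable_asianChain_gridIncrement (hB : IsBrownianMotion P B) (δ : ℝ) (n : ℕ) :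
    Measurable fun ω => asianChain δ (gridIncrement B δ ω) n :=
  measurable_asianChain monotone_const δ (measurable_gridIncrement hB δ) n

theorem measurable_M_A (hB : IsBrownianMotion P B) {t : ℝ} (ht : 0 < t) :
    Measurable fun ω => (M B t ω, A B t ω) :=
  measurable_of_tendsto_metrizable
    (fun n : ℕ => measurable_asianChain_gridIncrement hB (t / n) n)
    (tendsto_pi_nhds.2 fun ω =>
      tendsto_asianChain_gridIncrement (hB.continuous_paths ω) (hB.start ω) ht)

theorem lintegral_asianWeight_mul_le (hB : IsBrownianMotion P B) {t : ℝ} (ht : 0 < t) (c : ℝ)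
    (G : (ℝ × ℝ) →ᵇ ℝ≥0) :
    ∫⁻ ω, asianWeight c (M B t ω, A B t ω) * G (asianTransform c (M B t ω, A B t ω)) ∂P ≤
      ∫⁻ ω, G (M B t ω, A B t ω) ∂P := by
  have := hB.isProbabilityMeasure
  obtain ⟨ns, hns, hcubes⟩ := exists_seq_tendsto_sum_abs_gridIncrement_pow_three hB ht.le
  set X : ℕ → Ω → ℝ × ℝ := fun i ω => asianChain (t / ns i) (gridIncrement B (t / ns i) ω) (ns i)
  set D : ℕ → Ω → ℝ≥0∞ := fun i ω =>
    chainDensity c (t / ns i) (gridIncrement B (t / ns i) ω) (ns i)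
  have hG : Measurable fun p => (G p : ℝ≥0∞) := by fun_prop
  have hX : ∀ i, Measurable (X i) := fun i => measurable_asianChain_gridIncrement hB _ _
  have hD : ∀ i, Measurable (D i) := fun i =>
    measurable_chainDensity monotone_const c _ (measurable_gridIncrement hB _) _
  have hXlim : ∀ ω, Tendsto (fun i => X i ω) atTop (𝓝 (M B t ω, A B t ω)) := fun ω =>
    (tendsto_asianChain_gridIncrement (hB.continuous_paths ω) (hB.start ω) ht).comp
      hns.tendsto_atTop
  have hstep : ∀ᶠ i in atTop,
      ∫⁻ ω, D i ω * G (asianTransform c (X i ω)) ∂P ≤ ∫⁻ ω, G (X i ω) ∂P := by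
    filter_upwards [hns.tendsto_atTop.eventually_gt_atTop 0] with i hi
    have hδ : 0 < t / ns i := by positivity
    exact lintegral_chainDensity_mul_le hδ (measurable_gridIncrement hB _)
      (iIndepFun_gridIncrement hB hδ.le) (map_gridIncrement hB hδ.le) c (ns i) hG
  have hleft : ∀ᵐ ω ∂P, asianWeight c (M B t ω, A B t ω) *
      G (asianTransform c (M B t ω, A B t ω)) ≤
        liminf (fun i => D i ω * G (asianTransform c (X i ω))) atTop := by
    filter_upwards [hcubes] with ω hω
    exact asianWeight_mul_le_liminf (hXlim ω) (tendsto_chainDensity_gridIncrement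
      (hB.continuous_paths ω) (hB.start ω) ht hns.tendsto_atTop hω) G
  calc ∫⁻ ω, asianWeight c (M B t ω, A B t ω) * G (asianTransform c (M B t ω, A B t ω)) ∂P
      ≤ ∫⁻ ω, liminf (fun i => D i ω * G (asianTransform c (X i ω))) atTop ∂P :=
        lintegral_mono_ae hleft
    _ ≤ liminf (fun i => ∫⁻ ω, D i ω * G (asianTransform c (X i ω)) ∂P) atTop :=
        lintegral_liminf_le fun i => by fun_prop
    _ ≤ liminf (fun i => ∫⁻ ω, G (X i ω) ∂P) atTop := liminf_le_liminf hstep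
    _ = ∫⁻ ω, G (M B t ω, A B t ω) ∂P :=
        (tendsto_lintegral_boundedContinuousFunction_comp hX (ae_of_all _ hXlim) G).liminf_eq

theorem asianPush_map_M_A_le (hB : IsBrownianMotion P B) {t : ℝ} (ht : 0 < t) (c : ℝ) :
    asianPush c (P.map fun ω => (M B t ω, A B t ω)) ≤ P.map fun ω => (M B t ω, A B t ω) := by
  have := hB.isProbabilityMeasure
  refine measure_le_of_forall_lintegral_le fun G => ?_
  rw [lintegral_asianPush _ _ (by fun_prop), lintegral_map (by fun_prop) (measurable_M_A hB ht),
    lintegral_map (by fun_prop) (measurable_M_A hB ht)]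
  exact lintegral_asianWeight_mul_le hB ht c G

theorem integral_asianPush {E : Type*} [NormedAddCommGroup E] [NormedSpace ℝ E] (c : ℝ)
    (μ : Measure (ℝ × ℝ)) {f : ℝ × ℝ → E} (hf : StronglyMeasurable f) :
    ∫ q, f q ∂(asianPush c μ) =
      ∫ p in asianDomain c, Real.exp (asianLogWeight c p) • f (asianTransform c p) ∂μ := by
  rw [asianPush, integral_map (by fun_prop) hf.aestronglyMeasurable,
    integral_withDensity_eq_integral_toReal_smul (by fun_prop)
      (ae_of_all _ fun p => (asianWeight_ne_top c p).lt_top),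
    ← integral_indicator (measurableSet_asianDomain c)]
  refine integral_congr_ae (ae_of_all _ fun p => ?_)
  by_cases hp : p ∈ asianDomain c
  · simp [indicator_of_mem hp, asianWeight_of_mem hp, Real.exp_nonneg]
  · simp [indicator_of_notMem hp, asianWeight_of_notMem hp]

theorem exp_asianLogWeight_half (y : ℝ) (p : ℝ × ℝ) :
    Real.exp (asianLogWeight (y / 2) p) =
      Real.exp (-y) * Real.exp (y * p.1 / (1 + y / 2 * p.2)) := by
  rw [asianLogWeight, ← Real.exp_add]
  ring_nf

theorem asian_key_identity_general (hB : IsBrownianMotion P B) {t : ℝ} (ht : 0 < t) (y : ℝ)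
    {E : Type*} [NormedAddCommGroup E] [NormedSpace ℝ E] {f : ℝ × ℝ → E}
    (hf : StronglyMeasurable f) :
    ∫ ω, {ω | 0 < 1 - y / 2 * A B t ω}.indicator (fun ω => f (M B t ω, A B t ω)) ω ∂P =
      Real.exp (-y) • ∫ ω, {ω | 0 < 1 + y / 2 * A B t ω}.indicator (fun ω =>
        Real.exp (y * M B t ω / (1 + y / 2 * A B t ω)) •
          f (M B t ω / (1 + y / 2 * A B t ω) ^ 2, A B t ω / (1 + y / 2 * A B t ω))) ω ∂P := by
  have hMA := measurable_M_A hB ht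
  have hweighted : StronglyMeasurable fun p =>
      Real.exp (asianLogWeight (y / 2) p) • f (asianTransform (y / 2) p) :=
    Measurable.stronglyMeasurable (by fun_prop) |>.smul (hf.comp_measurable (by fun_prop))
  have h := integral_asianPush (y / 2) (P.map fun ω => (M B t ω, A B t ω)) hf
  rw [asianPush_eq_restrict (asianPush_map_M_A_le hB ht),
    setIntegral_map (measurableSet_asianDomain _) hf.aestronglyMeasurable hMA.aemeasurable,
    setIntegral_map (measurableSet_asianDomain _) hweighted.aestronglyMeasurable hMA.aemeasurable,
    ← integral_indicator (hMA (measurableSet_asianDomain _)),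
    ← integral_indicator (hMA (measurableSet_asianDomain _))] at h
  simp only [exp_asianLogWeight_half, mul_smul, indicator_const_smul_apply, integral_smul] at h
  simpa only [asianDomain, asianTransform, preimage_ofPred_eq, neg_mul, ← sub_eq_add_neg] using h

end Brownian

theorem one_sub_half_mul_pos_iff {y : ℝ} (hy : 0 < y) (a : ℝ) :
    0 < 1 - y / 2 * a ↔ a < 2 / y := by
  rw [sub_pos, lt_div_iff₀ hy]
  constructor <;> intro h <;> linarith

theorem mul_div_one_add_half_mul {y : ℝ} (hy : y ≠ 0) (m a : ℝ) :
    y * m / (1 + y / 2 * a) = m / (y⁻¹ + a / 2) := by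
  rw [← mul_div_mul_left m (y⁻¹ + a / 2) hy, mul_add, mul_inv_cancel₀ hy]
  ring_nf

theorem one_add_half_mul_A_pos {Ω : Type*} {y t : ℝ} (hy : 0 ≤ y) (ht : 0 ≤ t) (B : ℝ → Ω → ℝ)
    (ω : Ω) : 0 < 1 + y / 2 * A B t ω := by
  have hA : 0 ≤ A B t ω := intervalIntegral.integral_nonneg ht fun _ _ => Real.exp_nonneg _
  positivity

theorem asian_key_identity (hB : IsBrownianMotion P B)
    (t y : ℝ) (ht : 0 < t) (hy : 0 < y)
    (f : ℝ × ℝ → ℝ) (hf : Measurable f) (hf0 : ∀ p, 0 ≤ f p) :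
    (∫ ω, ({ω | A B t ω < 2 / y}.indicator (fun ω => f (M B t ω, A B t ω)) ω) ∂P)
      = Real.exp (-y) *
        ∫ ω, f (M B t ω / (1 + y / 2 * A B t ω) ^ 2,
                A B t ω / (1 + y / 2 * A B t ω)) *
              Real.exp (M B t ω / (y⁻¹ + A B t ω / 2)) ∂P := by
  simpa only [one_sub_half_mul_pos_iff hy, one_add_half_mul_A_pos hy.le ht.le, ofPred_true,
    indicator_univ, mul_div_one_add_half_mul hy.ne', smul_eq_mul, mul_comm (Real.exp _) (f _)]
    using asian_key_identity_general hB ht y hf.stronglyMeasurable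
end
end

section
/- For every t > 0 and every a > 0, P[ A_t < a ] = e^{-2/a} · E[ exp( 2·M_t / (a + A_t) ) ]. -/
open MeasureTheory ProbabilityTheory Real Set

noncomputable section

variable {Ω : Type*} [MeasurableSpace Ω] (P : MeasureTheory.Measure Ω) (B : ℝ → Ω → ℝ)

open Filter Topology

/-! The processes `Y± = (a ± A) / M` solve `dY = -Y dB + (Y ± 1) dt`, so their generators are
`L± f = (z ± 1) f' + z² / 2 f''`. With the weight `φ z = exp (-2 / z)` for `z > 0`, extended by `0`,
one has `L₋ (φ f) = φ L₊ f`, which suggests `E[(φ f)(Y₋)] = φ a * E[f (Y₊)]`. Letting `f` increase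
to `1 / φ` turns this into the theorem, since `Y₋ > 0` exactly when `A < a`.

The passage from generators to expectations is made without stochastic calculus. On a grid of mesh
`δ`, replacing `A` by its Riemann sums turns `Y±` into the Markov chain `R ↦ (R ± δ) ξ` with
independent log-normal factors `ξ = M_s / M_{s + δ}`. By Taylor expansion one step of the chain
intertwines `φ` up to `O(δ ^ (3 / 2))`, and telescoping over the `t / δ` steps leaves an error
`O(√δ)`. -/

/-- A function `f 0` on `(0, ∞)` together with its derivatives `f 1, …, f n`, all bounded by `c`
there. Measurability is required on the whole line so that the functions can be integrated against
laws on `ℝ`; the values on `(-∞, 0]` are otherwise arbitrary. -/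
structure IsBoundedJet (n : ℕ) (c : ℝ) (f : ℕ → ℝ → ℝ) : Prop where
  measurable : ∀ k, Measurable (f k)
  hasDerivAt : ∀ k < n, ∀ r > 0, HasDerivAt (f k) (f (k + 1) r) r
  abs_le : ∀ k ≤ n, ∀ r > 0, |f k r| ≤ c

/-- The derivatives of the product of two functions with derivatives `f` and `g`. -/
def leibniz (f g : ℕ → ℝ → ℝ) (k : ℕ) (r : ℝ) : ℝ :=
  ∑ ij ∈ Finset.HasAntidiagonal.antidiagonal k, (k.choose ij.1 : ℝ) * (f ij.1 r * g ij.2 r)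

lemma leibniz_zero (f g : ℕ → ℝ → ℝ) (r : ℝ) : leibniz f g 0 r = f 0 r * g 0 r := by
  simp [leibniz]

lemma leibniz_succ (f g : ℕ → ℝ → ℝ) (k : ℕ) (r : ℝ) :
    leibniz f g (k + 1) r = ∑ ij ∈ Finset.HasAntidiagonal.antidiagonal k, (k.choose ij.1 : ℝ) *
      (f (ij.1 + 1) r * g ij.2 r + f ij.1 r * g (ij.2 + 1) r) := by
  rw [leibniz, Finset.sum_antidiagonal_choose_succ_mul (fun i j => f i r * g j r),
    ← Finset.sum_add_distrib]
  refine Finset.sum_congr rfl fun ij hij => ?_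
  rw [Nat.choose_symm_of_eq_add (Finset.HasAntidiagonal.mem_antidiagonal.mp hij).symm]
  ring

namespace IsBoundedJet

variable {n : ℕ} {c d : ℝ} {f g : ℕ → ℝ → ℝ}

lemma nonneg (hf : IsBoundedJet n c f) : 0 ≤ c :=
  (abs_nonneg _).trans (hf.abs_le 0 n.zero_le 1 one_pos)

lemma const (n : ℕ) (a : ℝ) : IsBoundedJet n |a| (Pi.single 0 fun _ => a) where
  measurable k := by cases k <;> simp [measurable_zero]
  hasDerivAt k _ r _ := by cases k <;> simp [hasDerivAt_const]
  abs_le k _ r _ := by cases k <;> simp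

lemma sub (hf : IsBoundedJet n c f) (hg : IsBoundedJet n d g) :
    IsBoundedJet n (c + d) (f - g) where
  measurable k := (hf.measurable k).sub (hg.measurable k)
  hasDerivAt k hk r hr := (hf.hasDerivAt k hk r hr).sub (hg.hasDerivAt k hk r hr)
  abs_le k hk r hr := (abs_sub _ _).trans (add_le_add (hf.abs_le k hk r hr) (hg.abs_le k hk r hr))

lemma mul (hf : IsBoundedJet n c f) (hg : IsBoundedJet n d g) :
    IsBoundedJet n (2 ^ n * (c * d)) (leibniz f g) where
  measurable k := Finset.measurable_sum _ fun ij _ =>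
    ((hf.measurable ij.1).mul (hg.measurable ij.2)).const_mul _
  hasDerivAt k hk r hr := by
    rw [leibniz_succ]
    refine HasDerivAt.fun_sum fun ij hij => ?_
    have hij := Finset.HasAntidiagonal.mem_antidiagonal.mp hij
    have hf' := hf.hasDerivAt ij.1 (by omega) r hr
    have hg' := hg.hasDerivAt ij.2 (by omega) r hr
    exact (hf'.mul hg').const_mul _
  abs_le k hk r hr := by
    have hcd : 0 ≤ c * d := mul_nonneg hf.nonneg hg.nonneg
    calc |leibniz f g k r|
        ≤ ∑ ij ∈ Finset.HasAntidiagonal.antidiagonal k, (k.choose ij.1 : ℝ) * (c * d) := by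
          refine (Finset.abs_sum_le_sum_abs _ _).trans (Finset.sum_le_sum fun ij hij => ?_)
          have hij := Finset.HasAntidiagonal.mem_antidiagonal.mp hij
          rw [abs_mul, abs_mul, Nat.abs_cast]
          gcongr
          · exact hf.nonneg
          · exact hf.abs_le _ (by omega) r hr
          · exact hg.abs_le _ (by omega) r hr
      _ = 2 ^ k * (c * d) := by
          rw [← Finset.sum_mul, Finset.Nat.sum_antidiagonal_eq_sum_range_succ_mk]
          norm_cast
          rw [Nat.sum_range_choose]
      _ ≤ 2 ^ n * (c * d) := by gcongr; norm_num

lemma exists_pow (hf : IsBoundedJet n c f) (m : ℕ) :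
    ∃ C g, IsBoundedJet n C g ∧ g 0 = f 0 ^ m := by
  induction m with
  | zero => exact ⟨_, _, const n 1, by ext; simp⟩
  | succ m ih =>
    obtain ⟨C, g, hg, h0⟩ := ih
    exact ⟨_, _, hg.mul hf, by ext r; rw [leibniz_zero, h0, Pi.pow_apply, Pi.pow_apply, pow_succ]⟩

lemma tail (hf : IsBoundedJet (n + 1) c f) : IsBoundedJet n c fun k => f (k + 1) where
  measurable k := hf.measurable (k + 1)
  hasDerivAt k hk := hf.hasDerivAt (k + 1) (by omega)
  abs_le k hk := hf.abs_le (k + 1) (by omega)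

lemma abs_sub_taylor_le (hf : IsBoundedJet n c f) {y z : ℝ} (hy : 0 < y) (hz : 0 < z) :
    |f 0 y - ∑ k ∈ Finset.range n, f k z * (y - z) ^ k / k.factorial| ≤ c * |y - z| ^ n := by
  induction n generalizing f y with
  | zero => simpa using hf.abs_le 0 le_rfl y hy
  | succ n ih =>
    set T : ℝ → ℝ := fun x =>
      f 0 x - ∑ k ∈ Finset.range (n + 1), f k z * (x - z) ^ k / k.factorial with hT
    have hTz : T z = 0 := by simp [hT, Finset.sum_range_succ']
    have hpos : ∀ x ∈ uIcc z y, 0 < x := fun x hx => (lt_min hz hy).trans_le hx.1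
    have hderiv : ∀ x ∈ uIcc z y, HasDerivWithinAt T
        (f 1 x - ∑ k ∈ Finset.range n, f (k + 1) z * (x - z) ^ k / k.factorial) (uIcc z y) x := by
      intro x hx
      have hterm : ∀ k ∈ Finset.range n,
          HasDerivAt (fun x => f (k + 1) z * (x - z) ^ (k + 1) / (k + 1).factorial)
            (f (k + 1) z * (x - z) ^ k / k.factorial) x := by
        intro k _
        refine (((((hasDerivAt_id' x).sub_const z).fun_pow (k + 1)).const_mul
          (f (k + 1) z)).div_const ((k + 1).factorial : ℝ)).congr_deriv ?_
        rw [Nat.factorial_succ, Nat.add_sub_cancel]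
        push_cast
        field_simp
      have hsum := (HasDerivAt.fun_sum hterm).add_const (f 0 z * (x - z) ^ 0 / Nat.factorial 0)
      simp only [hT, Finset.sum_range_succ' _ n]
      exact ((hf.hasDerivAt 0 n.succ_pos x (hpos x hx)).sub hsum).hasDerivWithinAt
    have hbound : ∀ x ∈ uIcc z y,
        ‖f 1 x - ∑ k ∈ Finset.range n, f (k + 1) z * (x - z) ^ k / k.factorial‖
          ≤ c * |y - z| ^ n := by
      intro x hx
      refine (ih hf.tail (hpos x hx)).trans ?_
      exact mul_le_mul_of_nonneg_left
        (pow_le_pow_left₀ (abs_nonneg _) (abs_sub_left_of_mem_uIcc hx) n) hf.nonneg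
    have hmvt := (convex_uIcc z y).norm_image_sub_le_of_norm_hasDerivWithin_le hderiv hbound
      left_mem_uIcc right_mem_uIcc
    rwa [hTz, sub_zero, Real.norm_eq_abs, Real.norm_eq_abs, mul_assoc, ← pow_succ] at hmvt

lemma abs_integral_sub_taylor_le (hf : IsBoundedJet n c f) {α : Type*} [MeasurableSpace α]
    {μ : Measure α} [IsProbabilityMeasure μ] {X : α → ℝ} (hX : MemLp X n μ)
    (hpos : ∀ᵐ x ∂μ, 0 < X x) {z : ℝ} (hz : 0 < z) :
    |∫ x, f 0 (X x) ∂μ - ∑ k ∈ Finset.range n, f k z / k.factorial * ∫ x, (X x - z) ^ k ∂μ|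
      ≤ c * ∫ x, |X x - z| ^ n ∂μ := by
  have hXz : MemLp (fun x => X x - z) n μ := hX.sub (memLp_const z)
  have hpow : ∀ k ≤ n, Integrable (fun x => (X x - z) ^ k) μ := fun k hk =>
    ((hXz.mono_exponent (p := k) (by exact_mod_cast hk)).integrable_norm_pow').mono'
      (hXz.1.pow k) (.of_forall fun x => (norm_pow _ _).le)
  have hf0 : Integrable (fun x => f 0 (X x)) μ := by
    refine .of_bound ((hf.measurable 0).comp_aemeasurable hX.aemeasurable).aestronglyMeasurable c ?_
    filter_upwards [hpos] with x hx using hf.abs_le 0 n.zero_le _ hx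
  have hterm : ∀ k ∈ Finset.range n,
      Integrable (fun x => f k z / k.factorial * (X x - z) ^ k) μ := fun k hk =>
    (hpow k (Finset.mem_range.mp hk).le).const_mul _
  simp_rw [← integral_const_mul]
  rw [← integral_finsetSum _ hterm, ← integral_sub hf0 (integrable_finsetSum _ hterm)]
  refine (abs_integral_le_integral_abs).trans
    (integral_mono_ae (hf0.sub (integrable_finsetSum _ hterm)).abs ?_ ?_)
  · simpa only [abs_pow] using (hpow n le_rfl).abs.const_mul c
  · filter_upwards [hpos] with x hx
    simpa only [div_mul_eq_mul_div] using hf.abs_sub_taylor_le hx hz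

end IsBoundedJet

/-- The step of a Markov chain on functions: `affineStep b μ f r` is the expectation of `f` at the
random affine image `(r + b) X` of `r`, where `X` has law `μ`. -/
def affineStep (b : ℝ) (μ : Measure ℝ) (f : ℝ → ℝ) (r : ℝ) : ℝ :=
  ∫ x, f ((r + b) * x) ∂μ

section AffineStep

variable {b c : ℝ} {μ : Measure ℝ} {f : ℝ → ℝ}

lemma measurable_affineStep [SFinite μ] (hf : Measurable f) : Measurable (affineStep b μ f) :=
  (StronglyMeasurable.integral_prod_right (ν := μ) (f := fun r x => f ((r + b) * x))
    (by fun_prop : Measurable fun p : ℝ × ℝ => f ((p.1 + b) * p.2)).stronglyMeasurable).measurable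

lemma abs_affineStep_le [IsProbabilityMeasure μ] (hf : ∀ r, |f r| ≤ c) (r : ℝ) :
    |affineStep b μ f r| ≤ c := by
  simpa [affineStep] using norm_integral_le_of_norm_le_const (μ := μ)
    (f := fun x => f ((r + b) * x)) (ae_of_all _ fun x => hf ((r + b) * x))

lemma affineStep_sub_affineStep [IsProbabilityMeasure μ] {g : ℝ → ℝ} {d : ℝ} (hf : Measurable f)
    (hfc : ∀ r, |f r| ≤ c) (hg : Measurable g) (hgd : ∀ r, |g r| ≤ d) (r : ℝ) :
    affineStep b μ f r - affineStep b μ g r = affineStep b μ (fun s => f s - g s) r :=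
  (integral_sub
    (.of_bound (hf.comp (measurable_const_mul _)).aestronglyMeasurable c
      (ae_of_all _ fun _ => hfc _))
    (.of_bound (hg.comp (measurable_const_mul _)).aestronglyMeasurable d
      (ae_of_all _ fun _ => hgd _))).symm

lemma measurable_affineStep_iterate [SFinite μ] (hf : Measurable f) (n : ℕ) :
    Measurable ((affineStep b μ)^[n] f) :=
  Function.Iterate.rec Measurable hf (fun _ h => measurable_affineStep h) n

lemma abs_affineStep_iterate_le [IsProbabilityMeasure μ] (hf : ∀ r, |f r| ≤ c) (n : ℕ) (r : ℝ) :
    |(affineStep b μ)^[n] f r| ≤ c :=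
  Function.Iterate.rec (fun g : ℝ → ℝ => ∀ r, |g r| ≤ c) hf (fun _ h => abs_affineStep_le h) n r

end AffineStep

/-- The derivatives of `affineStep b μ (f 0)`, obtained by differentiating under the integral. -/
def affineStepJet (b : ℝ) (μ : Measure ℝ) (f : ℕ → ℝ → ℝ) (k : ℕ) (r : ℝ) : ℝ :=
  ∫ x, x ^ k * f k ((r + b) * x) ∂μ

lemma affineStepJet_zero (b : ℝ) (μ : Measure ℝ) (f : ℕ → ℝ → ℝ) :
    affineStepJet b μ f 0 = affineStep b μ (f 0) := by
  ext r; simp [affineStepJet, affineStep]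

namespace IsBoundedJet

variable {n : ℕ} {b c m : ℝ} {f : ℕ → ℝ → ℝ} {μ : Measure ℝ}

lemma integrable_pow_mul_comp (hf : IsBoundedJet n c f) (hb : 0 ≤ b) (hpos : ∀ᵐ x ∂μ, 0 < x)
    {k : ℕ} (hk : k ≤ n) (hint : Integrable (fun x => x ^ k) μ) {r : ℝ} (hr : 0 < r) :
    Integrable (fun x => x ^ k * f k ((r + b) * x)) μ := by
  refine hint.mul_bdd (c := c)
    ((hf.measurable k).comp (measurable_const_mul (r + b))).aestronglyMeasurable ?_
  filter_upwards [hpos] with x hx using hf.abs_le k hk _ (by positivity)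

protected lemma affineStep [SFinite μ] (hf : IsBoundedJet n c f) (hb : 0 ≤ b)
    (hpos : ∀ᵐ x ∂μ, 0 < x) (hint : ∀ k ≤ n, Integrable (fun x => x ^ k) μ)
    (hm : ∀ k ≤ n, ∫ x, x ^ k ∂μ ≤ m) : IsBoundedJet n (c * m) (affineStepJet b μ f) where
  measurable k := (StronglyMeasurable.integral_prod_right (ν := μ)
    (f := fun r x => x ^ k * f k ((r + b) * x)) (by
      have := hf.measurable k
      exact (by fun_prop : Measurable fun p : ℝ × ℝ =>
        p.2 ^ k * f k ((p.1 + b) * p.2)).stronglyMeasurable)).measurable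
  hasDerivAt k hk r hr := by
    refine (hasDerivAt_integral_of_dominated_loc_of_deriv_le (bound := fun x => x ^ (k + 1) * c)
      (F' := fun r x => x ^ (k + 1) * f (k + 1) ((r + b) * x)) (Ioi_mem_nhds hr)
      ?_ ?_ ?_ ?_ ?_ ?_).2
    · have := hf.measurable k
      exact .of_forall fun r => by fun_prop
    · exact hf.integrable_pow_mul_comp hb hpos hk.le (hint k hk.le) hr
    · have := hf.measurable (k + 1)
      fun_prop
    · filter_upwards [hpos] with x hx s (hs : 0 < s)
      rw [norm_mul, Real.norm_of_nonneg (by positivity)]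
      gcongr
      exact hf.abs_le (k + 1) hk _ (by positivity)
    · exact (hint (k + 1) hk).mul_const c
    · filter_upwards [hpos] with x hx s (hs : 0 < s)
      have hd : HasDerivAt (fun r => f k ((r + b) * x)) (f (k + 1) ((s + b) * x) * (1 * x)) s :=
        (hf.hasDerivAt k hk ((s + b) * x) (by positivity)).comp s
          (((hasDerivAt_id' s).add_const b).mul_const x)
      exact (hd.const_mul (x ^ k)).congr_deriv (by ring)
  abs_le k hk r hr := by
    have hc := hf.nonneg
    calc |affineStepJet b μ f k r|
        ≤ ∫ x, x ^ k * c ∂μ := by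
          refine norm_integral_le_of_norm_le (f := fun x => x ^ k * f k ((r + b) * x))
            ((hint k hk).mul_const c) ?_
          filter_upwards [hpos] with x hx
          rw [norm_mul, Real.norm_of_nonneg (by positivity)]
          gcongr
          exact hf.abs_le k hk _ (by positivity)
      _ ≤ c * m := by
          rw [integral_mul_const, mul_comm]
          exact mul_le_mul_of_nonneg_left (hm k hk) hc

lemma exists_affineStep_iterate [SFinite μ] (hf : IsBoundedJet n c f) (hb : 0 ≤ b)
    (hpos : ∀ᵐ x ∂μ, 0 < x) (hint : ∀ k ≤ n, Integrable (fun x => x ^ k) μ)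
    (hm : ∀ k ≤ n, ∫ x, x ^ k ∂μ ≤ m) (N : ℕ) :
    ∃ g, IsBoundedJet n (c * m ^ N) g ∧ g 0 = (_root_.affineStep b μ)^[N] (f 0) := by
  induction N with
  | zero => exact ⟨f, by simpa using hf, rfl⟩
  | succ N ih =>
    obtain ⟨g, hg, h0⟩ := ih
    refine ⟨_, (pow_succ m N).symm ▸ mul_assoc c (m ^ N) m ▸ hg.affineStep hb hpos hint hm, ?_⟩
    rw [affineStepJet_zero, h0, Function.iterate_succ_apply']

end IsBoundedJet

/-- The random affine recursion `R₀ = a`, `Rₖ₊₁ = (Rₖ + b) ξₖ`. -/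
def affineChain {α : Type*} (b a : ℝ) (ξ : ℕ → α → ℝ) : ℕ → α → ℝ
  | 0, _ => a
  | k + 1, x => (affineChain b a ξ k x + b) * ξ k x

section AffineChain

variable {P} {b a : ℝ} {ξ : ℕ → Ω → ℝ}

lemma measurable_affineChain (hξ : ∀ k, Measurable (ξ k)) (k : ℕ) :
    Measurable (affineChain b a ξ k) := by
  induction k with
  | zero => exact measurable_const
  | succ k ih => exact (ih.add_const b).mul (hξ k)

lemma indepFun_affineChain (hξ : ∀ k, Measurable (ξ k)) (hind : iIndepFun ξ P) (k : ℕ) :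
    IndepFun (affineChain b a ξ k) (ξ k) P := by
  have hadapted : ∀ n, Measurable[⨆ j ∈ Iio n, MeasurableSpace.comap (ξ j) inferInstance]
      (affineChain b a ξ n) := by
    intro n
    induction n with
    | zero => exact measurable_const
    | succ n ih =>
      refine .mul (.add_const (ih.mono ?_ le_rfl) b) (.of_comap_le ?_)
      · exact biSup_mono fun j hj => lt_trans hj n.lt_succ_self
      · exact le_biSup (fun j => MeasurableSpace.comap (ξ j) inferInstance) n.lt_succ_self
  have hdisj : Disjoint (Iio k) ({k} : Set ℕ) := by simp
  have hindep := indep_iSup_of_disjoint (fun j => (hξ j).comap_le) hind hdisj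
  rw [iSup_singleton] at hindep
  exact indep_of_indep_of_le_left hindep (hadapted k).comap_le

lemma integral_comp_affine_eq_integral_affineStep [IsProbabilityMeasure P] {c : ℝ} {f : ℝ → ℝ}
    (hf : Measurable f) (hc : ∀ r, |f r| ≤ c) {R X : Ω → ℝ} (hR : Measurable R)
    (hX : Measurable X) (hRX : IndepFun R X P) :
    ∫ ω, f ((R ω + b) * X ω) ∂P = ∫ ω, affineStep b (P.map X) f (R ω) ∂P := by
  have := Measure.isProbabilityMeasure_map hR.aemeasurable (μ := P)
  have := Measure.isProbabilityMeasure_map hX.aemeasurable (μ := P)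
  have hF : Measurable fun p : ℝ × ℝ => f ((p.1 + b) * p.2) := by fun_prop
  rw [← integral_map hR.aemeasurable (measurable_affineStep hf).aestronglyMeasurable,
    ← integral_map (φ := fun ω => (R ω, X ω)) (f := fun p : ℝ × ℝ => f ((p.1 + b) * p.2))
      (hR.prodMk hX).aemeasurable hF.aestronglyMeasurable,
    (indepFun_iff_map_prod_eq_prod_map_map hR.aemeasurable hX.aemeasurable).mp hRX,
    integral_prod _ (.of_bound hF.aestronglyMeasurable c (ae_of_all _ fun p => hc _))]
  rfl

lemma integral_comp_affineChain [IsProbabilityMeasure P] {c : ℝ} {f : ℝ → ℝ} {μ : Measure ℝ}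
    (hξ : ∀ k, Measurable (ξ k)) (hind : iIndepFun ξ P) (hlaw : ∀ k, P.map (ξ k) = μ)
    (hf : Measurable f) (hc : ∀ r, |f r| ≤ c) (n : ℕ) :
    ∫ ω, f (affineChain b a ξ n ω) ∂P = (affineStep b μ)^[n] f a := by
  induction n generalizing f with
  | zero => simp [affineChain]
  | succ n ih =>
    have : IsProbabilityMeasure μ := hlaw 0 ▸ Measure.isProbabilityMeasure_map (hξ 0).aemeasurable
    rw [Function.iterate_succ_apply, ← ih (measurable_affineStep hf) (abs_affineStep_le hc),
      ← hlaw n]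
    exact integral_comp_affine_eq_integral_affineStep hf hc (measurable_affineChain hξ n) (hξ n)
      (indepFun_affineChain hξ hind n)

end AffineChain

/-- The weight `exp (-2 / r)` for `r > 0`, extended by `0` to `r ≤ 0`. It intertwines the generators
of the two diffusions `(a ± A) / M`. -/
def weight (r : ℝ) : ℝ :=
  expNegInvGlue (r / 2)

/-- Polynomials `pₖ` such that the `k`-th derivative of `weight` is `2⁻ᵏ pₖ (2 / r) weight r`. -/
def weightPoly : ℕ → Polynomial ℝ
  | 0 => 1
  | k + 1 => Polynomial.X ^ 2 * (weightPoly k - (weightPoly k).derivative)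

/-- The derivatives of `weight`. -/
def weightJet (k : ℕ) (r : ℝ) : ℝ :=
  2⁻¹ ^ k * ((weightPoly k).eval (r / 2)⁻¹ * weight r)

/-- The generator of a solution of `dY = -Y dB + (Y + s) dt`, applied to a function with
derivatives `f`. -/
def generator (s : ℝ) (f : ℕ → ℝ → ℝ) (z : ℝ) : ℝ :=
  (z + s) * f 1 z + z ^ 2 / 2 * f 2 z

section Weight

variable {r : ℝ}

lemma weight_nonneg (r : ℝ) : 0 ≤ weight r :=
  expNegInvGlue.nonneg _

lemma weight_pos (hr : 0 < r) : 0 < weight r :=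
  expNegInvGlue.pos_of_pos (by positivity)

lemma weight_of_nonpos (hr : r ≤ 0) : weight r = 0 :=
  expNegInvGlue.zero_of_nonpos (by linarith)

lemma weight_of_pos (hr : 0 < r) : weight r = exp (-2 / r) := by
  rw [weight, expNegInvGlue, if_neg (by linarith), inv_div, neg_div]

lemma weight_le_one (r : ℝ) : weight r ≤ 1 := by
  rcases le_or_gt r 0 with hr | hr
  · exact (weight_of_nonpos hr).trans_le zero_le_one
  · rw [weight_of_pos hr, exp_le_one_iff, neg_div]
    exact neg_nonpos.mpr (by positivity)

lemma abs_weight_le_one (r : ℝ) : |weight r| ≤ 1 :=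
  (abs_of_nonneg (weight_nonneg r)).trans_le (weight_le_one r)

lemma continuous_weight : Continuous weight :=
  (expNegInvGlue.contDiff (n := 0)).continuous.comp (continuous_id.div_const 2)

lemma weight_le_sq (r : ℝ) : weight r ≤ r ^ 2 / 2 := by
  rcases le_or_gt r 0 with hr | hr
  · rw [weight_of_nonpos hr]; positivity
  · rw [weight_of_pos hr, neg_div, exp_neg, inv_le_comm₀ (exp_pos _) (by positivity)]
    calc (r ^ 2 / 2)⁻¹ = (2 / r) ^ 2 / Nat.factorial 2 := by
          rw [Nat.factorial_two]; field_simp; norm_num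
      _ ≤ exp (2 / r) := pow_div_factorial_le_exp _ (by positivity) 2

lemma weightJet_zero : weightJet 0 = weight := by
  ext r; simp [weightJet, weightPoly]

lemma exists_abs_polynomial_eval_le_mul_exp (p : Polynomial ℝ) :
    ∃ C, ∀ u ≥ 0, |p.eval u| ≤ C * exp u := by
  induction p using Polynomial.induction_on' with
  | add p q hp hq =>
    obtain ⟨C, hC⟩ := hp
    obtain ⟨D, hD⟩ := hq
    refine ⟨C + D, fun u hu => ?_⟩
    rw [Polynomial.eval_add, add_mul]
    exact (abs_add_le _ _).trans (add_le_add (hC u hu) (hD u hu))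
  | monomial n a =>
    refine ⟨|a| * n.factorial, fun u hu => ?_⟩
    rw [Polynomial.eval_monomial, abs_mul, abs_pow, abs_of_nonneg hu, mul_assoc]
    gcongr
    exact (div_le_iff₀' (by positivity)).mp (pow_div_factorial_le_exp u hu n)

lemma exists_abs_weightJet_le (k : ℕ) : ∃ C, ∀ r > 0, |weightJet k r| ≤ C := by
  obtain ⟨C, hC⟩ := exists_abs_polynomial_eval_le_mul_exp (weightPoly k)
  refine ⟨2⁻¹ ^ k * C, fun r hr => ?_⟩
  have hexp : weight r = (exp (r / 2)⁻¹)⁻¹ := by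
    rw [weight_of_pos hr, ← exp_neg, inv_div, neg_div]
  rw [weightJet, abs_mul, abs_mul, abs_of_nonneg (weight_nonneg r), hexp,
    abs_of_pos (by positivity), ← div_eq_mul_inv]
  gcongr
  exact (div_le_iff₀ (exp_pos _)).mpr (hC _ (by positivity))

lemma exists_isBoundedJet_weightJet (n : ℕ) : ∃ c, IsBoundedJet n c weightJet := by
  choose C hC using exists_abs_weightJet_le
  obtain ⟨c, hc⟩ := ((finite_Iic n).image C).bddAbove
  refine ⟨c, fun k => ?_, fun k _ r _ => ?_, fun k hk r hr =>
    (hC k r hr).trans (hc (mem_image_of_mem C hk))⟩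
  · have := continuous_weight.measurable
    have := (weightPoly k).continuous.measurable
    unfold weightJet
    fun_prop
  · have hglue := (expNegInvGlue.hasDerivAt_polynomial_eval_inv_mul (weightPoly k) (r / 2)).comp r
      ((hasDerivAt_id' r).div_const 2)
    refine (hglue.const_mul (2⁻¹ ^ k)).congr_deriv ?_
    rw [weightJet, weightPoly, weight, pow_succ]
    ring

lemma generator_leibniz_weightJet (f : ℕ → ℝ → ℝ) (hr : 0 < r) :
    generator (-1) (leibniz weightJet f) r = weight r * generator 1 f r := by
  have h1 : weightJet 1 r = 2 / r ^ 2 * weight r := by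
    simp only [weightJet, weightPoly, Polynomial.derivative_one, sub_zero, mul_one,
      Polynomial.eval_pow, Polynomial.eval_X]
    field_simp
  have h2 : weightJet 2 r = (4 / r ^ 4 - 4 / r ^ 3) * weight r := by
    simp only [weightJet, weightPoly, Polynomial.derivative_one, sub_zero, mul_one,
      Polynomial.derivative_X_pow, Polynomial.eval_mul, Polynomial.eval_pow, Polynomial.eval_X,
      Polynomial.eval_sub, Polynomial.eval_C, Nat.add_one_sub_one, pow_one]
    field_simp
    ring
  have hl1 : leibniz weightJet f 1 r = weight r * f 1 r + weightJet 1 r * f 0 r := by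
    simp only [leibniz_succ, Finset.HasAntidiagonal.antidiagonal_zero, Finset.sum_singleton,
      Nat.choose_self, Nat.cast_one, weightJet_zero]
    ring
  have hl2 : leibniz weightJet f 2 r =
      weight r * f 2 r + 2 * weightJet 1 r * f 1 r + weightJet 2 r * f 0 r := by
    rw [leibniz_succ, Finset.Nat.sum_antidiagonal_succ, Finset.HasAntidiagonal.antidiagonal_zero,
      Finset.sum_singleton, weightJet_zero]
    norm_num
    ring
  rw [generator, generator, hl1, hl2, h1, h2]
  field_simp
  ring

end Weight

/-- The law of `M_s / M_{s + δ}`: log-normal with parameters `δ / 2` and `δ`. -/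
def factorLaw (δ : ℝ) : Measure ℝ :=
  (gaussianReal (δ / 2) δ.toNNReal).map exp

instance (δ : ℝ) : IsProbabilityMeasure (factorLaw δ) :=
  Measure.isProbabilityMeasure_map measurable_exp.aemeasurable

section FactorLaw

variable {δ : ℝ}

lemma ae_pos_factorLaw (δ : ℝ) : ∀ᵐ x ∂factorLaw δ, 0 < x := by
  rw [factorLaw, ae_map_iff measurable_exp.aemeasurable measurableSet_Ioi]
  exact ae_of_all _ exp_pos

lemma integrable_pow_factorLaw (δ : ℝ) (j : ℕ) : Integrable (fun x => x ^ j) (factorLaw δ) := by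
  rw [factorLaw, integrable_map_measure (by fun_prop) (by fun_prop)]
  simpa only [Function.comp_def, ← exp_nat_mul] using integrable_exp_mul_gaussianReal (j : ℝ)

lemma integral_pow_factorLaw (hδ : 0 ≤ δ) (j : ℕ) :
    ∫ x, x ^ j ∂factorLaw δ = exp (j * (j + 1) / 2 * δ) := by
  rw [factorLaw, integral_map (by fun_prop) (by fun_prop)]
  simp_rw [← exp_nat_mul]
  have hmgf := congrFun (mgf_fun_id_gaussianReal (μ := δ / 2) (v := δ.toNNReal)) j
  rw [mgf, Real.coe_toNNReal δ hδ] at hmgf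
  rw [hmgf]
  ring_nf

lemma memLp_id_factorLaw (δ : ℝ) {n : ℕ} (hn : n ≠ 0) :
    MemLp (fun x => x) n (factorLaw δ) := by
  refine (integrable_norm_rpow_iff (by fun_prop) (by exact_mod_cast hn)
    (ENNReal.natCast_ne_top n)).mp ?_
  simpa only [ENNReal.toReal_natCast, rpow_natCast, norm_pow] using
    (integrable_pow_factorLaw δ n).norm

lemma integral_sub_one_pow_factorLaw (hδ : 0 ≤ δ) (n : ℕ) :
    ∫ x, (x - 1) ^ n ∂factorLaw δ = ∑ j ∈ Finset.range (n + 1),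
      (-1) ^ (n - j) * (n.choose j : ℝ) * exp (j * (j + 1) / 2 * δ) := by
  have hbinom : ∀ x : ℝ, (x - 1) ^ n = ∑ j ∈ Finset.range (n + 1),
      (-1) ^ (n - j) * (n.choose j : ℝ) * x ^ j := fun x => by
    rw [sub_eq_add_neg, add_pow]
    exact Finset.sum_congr rfl fun j _ => by ring
  simp_rw [hbinom]
  rw [integral_finsetSum _ fun j _ => (integrable_pow_factorLaw δ j).const_mul _]
  simp_rw [integral_const_mul, integral_pow_factorLaw hδ]

lemma abs_exp_mul_sub_le {u : ℝ} (hu : 0 ≤ u) (hu' : u ≤ 10) (hδ : 0 ≤ δ) (hδ' : δ ≤ 1 / 10) :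
    |exp (u * δ) - 1 - u * δ| ≤ u ^ 2 * δ ^ 2 := by
  rw [← mul_pow]
  refine abs_exp_sub_one_sub_id_le ?_
  rw [abs_of_nonneg (by positivity)]
  nlinarith

lemma abs_integral_sub_one_factorLaw_sub_le (hδ : 0 ≤ δ) (hδ' : δ ≤ 1 / 10) :
    |∫ x, (x - 1) ∂factorLaw δ - δ| ≤ δ ^ 2 := by
  have hmoment : ∫ x, (x - 1) ∂factorLaw δ = exp (1 * δ) - 1 := by
    have := integral_sub_one_pow_factorLaw hδ 1
    norm_num [Finset.sum_range_succ] at this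
    rw [this, one_mul]; ring
  rw [hmoment]
  simpa only [one_mul, one_pow] using abs_exp_mul_sub_le zero_le_one (by norm_num) hδ hδ'

lemma abs_integral_sub_one_sq_factorLaw_sub_le (hδ : 0 ≤ δ) (hδ' : δ ≤ 1 / 10) :
    |∫ x, (x - 1) ^ 2 ∂factorLaw δ - δ| ≤ 11 * δ ^ 2 := by
  have hmoment : ∫ x, (x - 1) ^ 2 ∂factorLaw δ = exp (3 * δ) - 2 * exp (1 * δ) + 1 := by
    rw [integral_sub_one_pow_factorLaw hδ 2]
    norm_num [Finset.sum_range_succ]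
    ring
  have h1 := abs_le.mp (abs_exp_mul_sub_le zero_le_one (by norm_num) hδ hδ')
  have h3 := abs_le.mp (abs_exp_mul_sub_le (u := 3) (by norm_num) (by norm_num) hδ hδ')
  rw [hmoment, abs_le]
  constructor <;> linarith

lemma integral_sub_one_pow_four_factorLaw_le (hδ : 0 ≤ δ) (hδ' : δ ≤ 1 / 10) :
    ∫ x, (x - 1) ^ 4 ∂factorLaw δ ≤ 302 * δ ^ 2 := by
  have hmoment : ∫ x, (x - 1) ^ 4 ∂factorLaw δ =
      exp (10 * δ) - 4 * exp (6 * δ) + 6 * exp (3 * δ) - 4 * exp (1 * δ) + 1 := by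
    rw [integral_sub_one_pow_factorLaw hδ 4]
    norm_num [Finset.sum_range_succ, Nat.choose]
    ring
  have h1 := abs_le.mp (abs_exp_mul_sub_le zero_le_one (by norm_num) hδ hδ')
  have h3 := abs_le.mp (abs_exp_mul_sub_le (u := 3) (by norm_num) (by norm_num) hδ hδ')
  have h6 := abs_le.mp (abs_exp_mul_sub_le (u := 6) (by norm_num) (by norm_num) hδ hδ')
  have h10 := abs_le.mp (abs_exp_mul_sub_le (u := 10) (by norm_num) le_rfl hδ hδ')
  rw [hmoment]
  linarith

lemma integrable_sub_one_pow_factorLaw (δ : ℝ) (n : ℕ) :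
    Integrable (fun x => (x - 1) ^ n) (factorLaw δ) := by
  simp_rw [sub_eq_add_neg, add_pow]
  exact integrable_finsetSum _ fun j _ =>
    ((integrable_pow_factorLaw δ j).mul_const _).mul_const _

lemma integral_abs_sub_one_pow_three_factorLaw_le (hδ : 0 < δ) (hδ' : δ ≤ 1 / 10) :
    ∫ x, |x - 1| ^ 3 ∂factorLaw δ ≤ 153 * (δ * √δ) := by
  have : 0 < √δ := sqrt_pos.mpr hδ
  have hamgm : ∀ x : ℝ, |x - 1| ^ 3 ≤ √δ / 2 * (x - 1) ^ 2 + (2 * √δ)⁻¹ * (x - 1) ^ 4 := by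
    intro x
    rw [← sq_abs, ← (show Even 4 by decide).pow_abs (x - 1)]
    have : 0 ≤ (2 * √δ)⁻¹ * |x - 1| ^ 2 * (√δ - |x - 1|) ^ 2 := by positivity
    refine sub_nonneg.mp (this.trans_eq ?_)
    field_simp
    ring
  calc ∫ x, |x - 1| ^ 3 ∂factorLaw δ
      ≤ ∫ x, (√δ / 2 * (x - 1) ^ 2 + (2 * √δ)⁻¹ * (x - 1) ^ 4) ∂factorLaw δ := by
        refine integral_mono_of_nonneg (ae_of_all _ fun x => by positivity) ?_ (ae_of_all _ hamgm)
        exact ((integrable_sub_one_pow_factorLaw δ 2).const_mul _).add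
          ((integrable_sub_one_pow_factorLaw δ 4).const_mul _)
    _ = √δ / 2 * ∫ x, (x - 1) ^ 2 ∂factorLaw δ
          + (2 * √δ)⁻¹ * ∫ x, (x - 1) ^ 4 ∂factorLaw δ := by
        rw [integral_add ((integrable_sub_one_pow_factorLaw δ 2).const_mul _)
          ((integrable_sub_one_pow_factorLaw δ 4).const_mul _), integral_const_mul,
          integral_const_mul]
    _ ≤ √δ / 2 * (4 * δ) + (2 * √δ)⁻¹ * (302 * δ ^ 2) := by
        have h2 := (abs_le.mp (abs_integral_sub_one_sq_factorLaw_sub_le hδ.le hδ')).2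
        gcongr
        · nlinarith
        · exact integral_sub_one_pow_four_factorLaw_le hδ.le hδ'
    _ = 153 * (δ * √δ) := by
        rw [show √δ / 2 * (4 * δ) + (2 * √δ)⁻¹ * (302 * δ ^ 2)
          = 2 * (δ * √δ) + 151 * (δ * (δ / √δ)) by ring, div_sqrt]
        ring

end FactorLaw

section OneStep

variable {δ s z : ℝ}

lemma abs_add_mul_le (hδ : 0 ≤ δ) (hδ' : δ ≤ 1) (hs : |s| ≤ 1) (hz : 0 ≤ z) :
    |z + s * δ| ≤ 1 + z := by
  have hsδ : |s * δ| ≤ 1 := by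
    rw [abs_mul, abs_of_nonneg hδ]
    exact mul_le_one₀ hs hδ hδ'
  calc |z + s * δ| ≤ |z| + |s * δ| := abs_add_le _ _
    _ ≤ 1 + z := by rw [abs_of_nonneg hz]; linarith

lemma integral_step_sub (δ s z : ℝ) :
    ∫ x, ((z + s * δ) * x - z) ∂factorLaw δ =
      (z + s * δ) * ∫ x, (x - 1) ∂factorLaw δ + s * δ := by
  have hint : Integrable (fun x => x - 1) (factorLaw δ) := by
    simpa only [pow_one] using integrable_sub_one_pow_factorLaw δ 1
  have hexp : ∀ x : ℝ, (z + s * δ) * x - z = (z + s * δ) * (x - 1) + s * δ := fun x => by ring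
  simp_rw [hexp]
  rw [integral_add (hint.const_mul _) (integrable_const _), integral_const_mul, integral_const,
    probReal_univ, one_smul]

lemma integral_step_sub_sq (δ s z : ℝ) :
    ∫ x, ((z + s * δ) * x - z) ^ 2 ∂factorLaw δ =
      (z + s * δ) ^ 2 * ∫ x, (x - 1) ^ 2 ∂factorLaw δ
        + 2 * (z + s * δ) * (s * δ) * ∫ x, (x - 1) ∂factorLaw δ + (s * δ) ^ 2 := by
  have hint : Integrable (fun x => x - 1) (factorLaw δ) := by
    simpa only [pow_one] using integrable_sub_one_pow_factorLaw δ 1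
  have hint2 := integrable_sub_one_pow_factorLaw δ 2
  have hexp : ∀ x : ℝ, ((z + s * δ) * x - z) ^ 2 = (z + s * δ) ^ 2 * (x - 1) ^ 2
      + 2 * (z + s * δ) * (s * δ) * (x - 1) + (s * δ) ^ 2 := fun x => by ring
  have hsum : Integrable (fun x => (z + s * δ) ^ 2 * (x - 1) ^ 2
      + 2 * (z + s * δ) * (s * δ) * (x - 1)) (factorLaw δ) :=
    (hint2.const_mul _).add (hint.const_mul _)
  simp_rw [hexp]
  rw [integral_add hsum (integrable_const _),
    integral_add (hint2.const_mul _) (hint.const_mul _), integral_const_mul, integral_const_mul,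
    integral_const, probReal_univ, one_smul]

lemma abs_integral_step_sub_le (hδ : 0 ≤ δ) (hδ' : δ ≤ 1 / 10) (hs : |s| ≤ 1) (hz : 0 ≤ z) :
    |∫ x, ((z + s * δ) * x - z) ∂factorLaw δ - δ * (z + s)| ≤ 2 * δ ^ 2 * (1 + z) := by
  have hw := abs_add_mul_le hδ (by linarith) hs hz
  have hm := abs_integral_sub_one_factorLaw_sub_le hδ hδ'
  rw [integral_step_sub]
  set m := ∫ x, (x - 1) ∂factorLaw δ
  calc |(z + s * δ) * m + s * δ - δ * (z + s)|
      = |(z + s * δ) * (m - δ) + s * δ ^ 2| := by ring_nf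
    _ ≤ |z + s * δ| * |m - δ| + |s| * δ ^ 2 := by
        rw [← abs_mul, ← abs_of_nonneg (sq_nonneg δ), ← abs_mul, abs_of_nonneg (sq_nonneg δ)]
        exact abs_add_le _ _
    _ ≤ (1 + z) * δ ^ 2 + 1 * δ ^ 2 := by gcongr
    _ ≤ 2 * δ ^ 2 * (1 + z) := by nlinarith [mul_nonneg hz (sq_nonneg δ)]

lemma abs_integral_step_sub_sq_le (hδ : 0 ≤ δ) (hδ' : δ ≤ 1 / 10) (hs : |s| ≤ 1) (hz : 0 ≤ z) :
    |∫ x, ((z + s * δ) * x - z) ^ 2 ∂factorLaw δ - δ * z ^ 2| ≤ 19 * δ ^ 2 * (1 + z) ^ 2 := by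
  have hw := abs_add_mul_le hδ (by linarith) hs hz
  have hm := abs_integral_sub_one_factorLaw_sub_le hδ hδ'
  have hv := abs_integral_sub_one_sq_factorLaw_sub_le hδ hδ'
  rw [integral_step_sub_sq]
  set m := ∫ x, (x - 1) ∂factorLaw δ
  set v := ∫ x, (x - 1) ^ 2 ∂factorLaw δ
  have hm' : |m| ≤ 2 * δ := by
    rw [abs_le] at hm ⊢
    constructor <;> nlinarith
  calc |(z + s * δ) ^ 2 * v + 2 * (z + s * δ) * (s * δ) * m + (s * δ) ^ 2 - δ * z ^ 2|
      = |(z + s * δ) ^ 2 * (v - δ) + 2 * ((z + s * δ) * s * m) * δ + 2 * (z * s) * δ ^ 2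
          + (1 + δ) * s ^ 2 * δ ^ 2| := by ring_nf
    _ ≤ |z + s * δ| ^ 2 * |v - δ| + 2 * (|z + s * δ| * |s| * |m|) * δ + 2 * (z * |s|) * δ ^ 2
          + (1 + δ) * |s| ^ 2 * δ ^ 2 := by
        refine (abs_add_le _ _).trans (add_le_add ((abs_add_le _ _).trans
          (add_le_add ((abs_add_le _ _).trans (add_le_add ?_ ?_)) ?_)) ?_) <;>
        simp only [abs_mul, abs_pow, abs_of_nonneg hδ, abs_of_nonneg hz,
          abs_of_nonneg (show 0 ≤ 1 + δ by linarith), Nat.abs_ofNat, le_refl]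
    _ ≤ (1 + z) ^ 2 * (11 * δ ^ 2) + 2 * ((1 + z) * 1 * (2 * δ)) * δ + 2 * (z * 1) * δ ^ 2
          + (1 + 1 / 10) * 1 ^ 2 * δ ^ 2 := by gcongr
    _ ≤ 19 * δ ^ 2 * (1 + z) ^ 2 := by
        nlinarith [mul_nonneg hz (sq_nonneg δ), mul_nonneg (sq_nonneg z) (sq_nonneg δ)]

lemma sq_le_mul_sqrt (hδ : 0 ≤ δ) (hδ' : δ ≤ 1) : δ ^ 2 ≤ δ * √δ := by
  rw [sq]
  gcongr
  exact le_sqrt_of_sq_le (by nlinarith)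

lemma integral_abs_step_sub_pow_three_le (hδ : 0 < δ) (hδ' : δ ≤ 1 / 10) (hs : |s| ≤ 1)
    (hz : 0 ≤ z) :
    ∫ x, |(z + s * δ) * x - z| ^ 3 ∂factorLaw δ ≤ 616 * (δ * √δ) * (1 + z) ^ 3 := by
  have hw := abs_add_mul_le hδ.le (by linarith) hs hz
  have hint : Integrable (fun x => 4 * (|z + s * δ| ^ 3 * |x - 1| ^ 3)) (factorLaw δ) := by
    simpa only [abs_pow] using
      (((integrable_sub_one_pow_factorLaw δ 3).abs).const_mul (|z + s * δ| ^ 3)).const_mul 4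
  have hpow : ∀ x : ℝ, |(z + s * δ) * x - z| ^ 3 ≤
      4 * (|z + s * δ| ^ 3 * |x - 1| ^ 3) + 4 * δ ^ 3 := by
    intro x
    calc |(z + s * δ) * x - z| ^ 3
        = |(z + s * δ) * (x - 1) + s * δ| ^ 3 := by ring_nf
      _ ≤ (|z + s * δ| * |x - 1| + 1 * δ) ^ 3 := by
          refine pow_le_pow_left₀ (abs_nonneg _) ((abs_add_le _ _).trans ?_) 3
          rw [abs_mul, abs_mul s, abs_of_pos hδ]
          gcongr
      _ ≤ 2 ^ (3 - 1) * ((|z + s * δ| * |x - 1|) ^ 3 + (1 * δ) ^ 3) :=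
          add_pow_le (by positivity) (by positivity) 3
      _ = _ := by ring
  calc ∫ x, |(z + s * δ) * x - z| ^ 3 ∂factorLaw δ
      ≤ ∫ x, (4 * (|z + s * δ| ^ 3 * |x - 1| ^ 3) + 4 * δ ^ 3) ∂factorLaw δ :=
        integral_mono_of_nonneg (ae_of_all _ fun x => by positivity)
          (hint.add (integrable_const _)) (ae_of_all _ hpow)
    _ = 4 * (|z + s * δ| ^ 3 * ∫ x, |x - 1| ^ 3 ∂factorLaw δ) + 4 * (δ * δ ^ 2) := by
        rw [integral_add hint (integrable_const _), integral_const_mul, integral_const_mul,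
          integral_const, probReal_univ, one_smul]
        ring
    _ ≤ 4 * ((1 + z) ^ 3 * (153 * (δ * √δ))) + 4 * (1 * (δ * √δ)) := by
        gcongr
        · exact integral_abs_sub_one_pow_three_factorLaw_le hδ hδ'
        · linarith
        · exact sq_le_mul_sqrt hδ.le (by linarith)
    _ ≤ 616 * (δ * √δ) * (1 + z) ^ 3 := by
        have : 1 ≤ (1 + z) ^ 3 := one_le_pow₀ (by linarith)
        nlinarith [mul_nonneg hδ.le (sqrt_nonneg δ)]

end OneStep

section Intertwining

variable {δ s z c C : ℝ} {f : ℕ → ℝ → ℝ}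

lemma abs_affineStep_sub_generator_le (hf : IsBoundedJet 3 c f) (hδ : 0 < δ) (hδ' : δ ≤ 1 / 10)
    (hs : |s| ≤ 1) (hz : 0 < z) (hzs : 0 < z + s * δ) :
    |affineStep (s * δ) (factorLaw δ) (f 0) z - (f 0 z + δ * generator s f z)|
      ≤ 700 * c * (δ * √δ) * (1 + z) ^ 3 := by
  have hc := hf.nonneg
  have hpos : ∀ᵐ x ∂factorLaw δ, 0 < (z + s * δ) * x := by
    filter_upwards [ae_pos_factorLaw δ] with x hx using mul_pos hzs hx
  have h1 := abs_integral_step_sub_le hδ.le hδ' hs hz.le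
  have h2 := abs_integral_step_sub_sq_le hδ.le hδ' hs hz.le
  have h3 := integral_abs_step_sub_pow_three_le hδ hδ' hs hz.le
  set m₁ := ∫ x, ((z + s * δ) * x - z) ∂factorLaw δ
  set m₂ := ∫ x, ((z + s * δ) * x - z) ^ 2 ∂factorLaw δ
  set m₃ := ∫ x, |(z + s * δ) * x - z| ^ 3 ∂factorLaw δ
  have htaylor : |affineStep (s * δ) (factorLaw δ) (f 0) z
      - (f 0 z + f 1 z * m₁ + f 2 z / 2 * m₂)| ≤ c * m₃ := by
    simpa [Finset.sum_range_succ, affineStep] using hf.abs_integral_sub_taylor_le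
      ((memLp_id_factorLaw δ three_ne_zero).const_mul (z + s * δ)) hpos hz
  have hη : δ ^ 2 ≤ δ * √δ := sq_le_mul_sqrt hδ.le (by linarith)
  calc |affineStep (s * δ) (factorLaw δ) (f 0) z - (f 0 z + δ * generator s f z)|
      = |(affineStep (s * δ) (factorLaw δ) (f 0) z - (f 0 z + f 1 z * m₁ + f 2 z / 2 * m₂))
          + f 1 z * (m₁ - δ * (z + s)) + f 2 z / 2 * (m₂ - δ * z ^ 2)| := by
        rw [generator]; ring_nf
    _ ≤ c * m₃ + c * (2 * δ ^ 2 * (1 + z)) + c / 2 * (19 * δ ^ 2 * (1 + z) ^ 2) := by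
        refine (abs_add_le _ _).trans
          (add_le_add ((abs_add_le _ _).trans (add_le_add htaylor ?_)) ?_)
        · rw [abs_mul]
          gcongr
          exact hf.abs_le 1 (by norm_num) z hz
        · rw [abs_mul, abs_div, Nat.abs_ofNat]
          gcongr
          exact hf.abs_le 2 (by norm_num) z hz
    _ ≤ c * (616 * (δ * √δ) * (1 + z) ^ 3) + c * (2 * (δ * √δ) * (1 + z) ^ 3)
          + c / 2 * (19 * (δ * √δ) * (1 + z) ^ 3) := by
        have hz1 : 1 ≤ 1 + z := by linarith
        gcongr
        · exact le_self_pow₀ hz1 three_ne_zero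
        · norm_num
    _ ≤ 700 * c * (δ * √δ) * (1 + z) ^ 3 := by
        have : 0 ≤ c * (δ * √δ) * (1 + z) ^ 3 := by positivity
        nlinarith

lemma IsBoundedJet.abs_affineStep_le {n : ℕ} {b : ℝ} (hf : IsBoundedJet n c f) (hb : 0 ≤ b)
    {μ : Measure ℝ} [IsProbabilityMeasure μ] (hpos : ∀ᵐ x ∂μ, 0 < x) (hz : 0 < z) :
    |_root_.affineStep b μ (f 0) z| ≤ c := by
  have hbound : ∀ᵐ x ∂μ, ‖f 0 ((z + b) * x)‖ ≤ c := by
    filter_upwards [hpos] with x hx using hf.abs_le 0 n.zero_le _ (by positivity)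
  simpa [_root_.affineStep] using norm_integral_le_of_norm_le_const hbound

lemma IsBoundedJet.abs_weight_mul_le {n : ℕ} (hf : IsBoundedJet n c f) (r : ℝ) :
    |weight r * f 0 r| ≤ c := by
  rcases le_or_gt r 0 with hr | hr
  · rw [weight_of_nonpos hr, zero_mul, abs_zero]
    exact hf.nonneg
  · rw [abs_mul, ← one_mul c]
    exact mul_le_mul (abs_weight_le_one r) (hf.abs_le 0 n.zero_le r hr) (abs_nonneg _) zero_le_one

lemma affineStep_weight_mul_eq_zero (g : ℝ → ℝ) (hz : z ≤ δ) :
    affineStep (-δ) (factorLaw δ) (fun r => weight r * g r) z = 0 := by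
  refine integral_eq_zero_of_ae ?_
  filter_upwards [ae_pos_factorLaw δ] with x hx
  have : (z + -δ) * x ≤ 0 := mul_nonpos_of_nonpos_of_nonneg (by linarith) hx.le
  rw [Pi.zero_apply, weight_of_nonpos this, zero_mul]

lemma abs_affineStep_weight_mul_sub_le_of_lt (hφ : IsBoundedJet 3 C weightJet)
    (hf : IsBoundedJet 3 c f) (hδ : 0 < δ) (hδ' : δ ≤ 1 / 10) (hz : δ < z) :
    |affineStep (-δ) (factorLaw δ) (fun r => weight r * f 0 r) z
        - weight z * affineStep δ (factorLaw δ) (f 0) z|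
      ≤ (5600 * C + 700) * c * (δ * √δ) * (1 + z) ^ 3 := by
  have hz0 : 0 < z := hδ.trans hz
  have hminus := abs_affineStep_sub_generator_le (hφ.mul hf) hδ hδ' (s := -1) (by norm_num) hz0
    (by linarith)
  have hplus := abs_affineStep_sub_generator_le hf hδ hδ' (s := 1) (by norm_num) hz0 (by linarith)
  have hleibniz : leibniz weightJet f 0 = fun r => weight r * f 0 r := by
    ext r; rw [leibniz_zero, weightJet_zero]
  rw [generator_leibniz_weightJet f hz0, hleibniz, neg_one_mul] at hminus
  rw [one_mul] at hplus
  set u := affineStep δ (factorLaw δ) (f 0) z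
  calc _ = |(affineStep (-δ) (factorLaw δ) (fun r => weight r * f 0 r) z
          - (weight z * f 0 z + δ * (weight z * generator 1 f z)))
          - weight z * (u - (f 0 z + δ * generator 1 f z))| := by ring_nf
    _ ≤ 700 * (2 ^ 3 * (C * c)) * (δ * √δ) * (1 + z) ^ 3
          + 1 * (700 * c * (δ * √δ) * (1 + z) ^ 3) := by
        refine (abs_sub _ _).trans (add_le_add hminus ?_)
        rw [abs_mul]
        exact mul_le_mul (abs_weight_le_one z) hplus (abs_nonneg _) zero_le_one
    _ = _ := by ring

lemma abs_affineStep_weight_mul_sub_le (hφ : IsBoundedJet 3 C weightJet)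
    (hf : IsBoundedJet 3 c f) (hδ : 0 < δ) (hδ' : δ ≤ 1 / 10) (z : ℝ) :
    |affineStep (-δ) (factorLaw δ) (fun r => weight r * f 0 r) z
        - weight z * affineStep δ (factorLaw δ) (f 0) z|
      ≤ (5600 * C + 700) * c * (δ * √δ) * (1 + |z|) ^ 3 := by
  have hc := hf.nonneg
  have hC := hφ.nonneg
  rcases lt_or_ge δ z with hδz | hzδ
  · rw [abs_of_pos (hδ.trans hδz)]
    exact abs_affineStep_weight_mul_sub_le_of_lt hφ hf hδ hδ' hδz
  rw [affineStep_weight_mul_eq_zero _ hzδ, zero_sub, abs_neg]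
  rcases le_or_gt z 0 with hz | hz
  · rw [weight_of_nonpos hz, zero_mul, abs_zero]
    positivity
  · rw [abs_mul, abs_of_nonneg (weight_nonneg z)]
    calc weight z * |affineStep δ (factorLaw δ) (f 0) z|
        ≤ δ ^ 2 / 2 * c := by
          refine mul_le_mul ((weight_le_sq z).trans (by gcongr))
            (hf.abs_affineStep_le hδ.le (ae_pos_factorLaw δ) hz) (abs_nonneg _) (by positivity)
      _ ≤ 1 * c * (δ * √δ) * 1 := by nlinarith [sq_le_mul_sqrt hδ.le (by linarith)]
      _ ≤ (5600 * C + 700) * c * (δ * √δ) * (1 + |z|) ^ 3 := by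
          gcongr
          · linarith
          · exact one_le_pow₀ (by linarith [abs_nonneg z])

end Intertwining

section Telescoping

variable {δ z c C : ℝ} {f : ℕ → ℝ → ℝ}

lemma integral_pow_factorLaw_le (hδ : 0 ≤ δ) {j : ℕ} (hj : j ≤ 3) :
    ∫ x, x ^ j ∂factorLaw δ ≤ exp (6 * δ) := by
  rw [integral_pow_factorLaw hδ]
  gcongr
  have : (j : ℝ) ≤ 3 := by exact_mod_cast hj
  nlinarith

lemma one_add_mul_pow_three (w x : ℝ) :
    (1 + w * x) ^ 3 = ∑ k ∈ Finset.range 4, w ^ k * (Nat.choose 3 k : ℝ) * x ^ k := by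
  rw [add_comm, add_pow]
  refine Finset.sum_congr rfl fun k _ => ?_
  rw [one_pow, mul_pow]; ring

lemma integrable_one_add_mul_pow_three_factorLaw (δ w : ℝ) :
    Integrable (fun x => (1 + w * x) ^ 3) (factorLaw δ) := by
  simp_rw [one_add_mul_pow_three]
  exact integrable_finsetSum _ fun k _ => (integrable_pow_factorLaw δ k).const_mul _

lemma integral_one_add_mul_pow_three_factorLaw_le (hδ : 0 ≤ δ) {w : ℝ} (hw : 0 ≤ w) :
    ∫ x, (1 + w * x) ^ 3 ∂factorLaw δ ≤ exp (6 * δ) * (1 + w) ^ 3 := by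
  rw [← mul_one w, one_add_mul_pow_three, Finset.mul_sum]
  simp_rw [mul_one w, one_add_mul_pow_three]
  rw [integral_finsetSum _ fun k _ => (integrable_pow_factorLaw δ k).const_mul _]
  refine Finset.sum_le_sum fun k hk => ?_
  rw [integral_const_mul, one_pow, mul_one, mul_comm]
  gcongr
  exact integral_pow_factorLaw_le hδ (by simpa [Nat.lt_succ_iff] using hk)

lemma abs_affineStep_le_of_abs_le {g : ℝ → ℝ} {E : ℝ} (hδ : 0 ≤ δ)
    (hg : ∀ r, |g r| ≤ E * (1 + |r|) ^ 3) (z : ℝ) :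
    |affineStep (-δ) (factorLaw δ) g z| ≤ E * exp (9 * δ) * (1 + |z|) ^ 3 := by
  have hE : 0 ≤ E := by simpa using (abs_nonneg _).trans (hg 0)
  have hgrowth : 1 + |z + -δ| ≤ exp δ * (1 + |z|) := by
    have := abs_add_le z (-δ)
    rw [abs_neg, abs_of_nonneg hδ] at this
    nlinarith [add_one_le_exp δ, abs_nonneg z]
  have hbound : ∀ᵐ x ∂factorLaw δ, ‖g ((z + -δ) * x)‖ ≤ E * (1 + |z + -δ| * x) ^ 3 := by
    filter_upwards [ae_pos_factorLaw δ] with x hx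
    simpa only [Real.norm_eq_abs, abs_mul, abs_of_pos hx] using hg ((z + -δ) * x)
  calc |affineStep (-δ) (factorLaw δ) g z|
      ≤ ∫ x, E * (1 + |z + -δ| * x) ^ 3 ∂factorLaw δ :=
        norm_integral_le_of_norm_le
          ((integrable_one_add_mul_pow_three_factorLaw δ _).const_mul E) hbound
    _ ≤ E * (exp (6 * δ) * (exp δ * (1 + |z|)) ^ 3) := by
        rw [integral_const_mul]
        gcongr
        exact (integral_one_add_mul_pow_three_factorLaw_le hδ (abs_nonneg _)).trans (by gcongr)
    _ = E * exp (9 * δ) * (1 + |z|) ^ 3 := by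
        rw [mul_pow, ← exp_nat_mul, ← mul_assoc (exp (6 * δ)), ← exp_add]
        push_cast
        ring_nf

lemma abs_affineStep_iterate_weight_mul_sub_le (hφ : IsBoundedJet 3 C weightJet)
    (hf : IsBoundedJet 3 c f) (hδ : 0 < δ) (hδ' : δ ≤ 1 / 10) (n : ℕ) (z : ℝ) :
    |(affineStep (-δ) (factorLaw δ))^[n] (fun r => weight r * f 0 r) z
        - weight z * (affineStep δ (factorLaw δ))^[n] (f 0) z|
      ≤ n * ((5600 * C + 700) * c * (δ * √δ)) * exp (9 * δ) ^ n * (1 + |z|) ^ 3 := by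
  set K := affineStep (-δ) (factorLaw δ)
  set L := affineStep δ (factorLaw δ)
  set E := (5600 * C + 700) * c * (δ * √δ) with hE
  have hE0 : 0 ≤ E := by have := hφ.nonneg; have := hf.nonneg; positivity
  have hmoment : ∀ k ≤ 3, ∫ x, x ^ k ∂factorLaw δ ≤ exp (9 * δ) := fun k hk =>
    (integral_pow_factorLaw_le hδ.le hk).trans (exp_le_exp.mpr (by linarith))
  have hmeas : Measurable fun r => weight r * f 0 r :=
    continuous_weight.measurable.mul (hf.measurable 0)
  induction n generalizing z with
  | zero => simp
  | succ n ih =>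
    obtain ⟨g, hg, hg0⟩ := hf.exists_affineStep_iterate hδ.le (ae_pos_factorLaw δ)
      (fun k _ => integrable_pow_factorLaw δ k) hmoment n
    set u := K^[n] fun r => weight r * f 0 r
    have hsplit : K u z - K (fun r => weight r * g 0 r) z = K (fun r => u r - weight r * g 0 r) z :=
      affineStep_sub_affineStep (measurable_affineStep_iterate hmeas n)
        (abs_affineStep_iterate_le hf.abs_weight_mul_le n)
        (continuous_weight.measurable.mul (hg.measurable 0)) hg.abs_weight_mul_le z
    have hpropagated := abs_affineStep_le_of_abs_le hδ.le (fun r => hg0 ▸ ih r) z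
    have hlocal := abs_affineStep_weight_mul_sub_le hφ hg hδ hδ' z
    rw [Function.iterate_succ_apply', Function.iterate_succ_apply', ← hg0]
    calc |K u z - weight z * L (g 0) z|
        = |K (fun r => u r - weight r * g 0 r) z
            + (K (fun r => weight r * g 0 r) z - weight z * L (g 0) z)| := by
          rw [← hsplit]; ring_nf
      _ ≤ n * E * exp (9 * δ) ^ n * exp (9 * δ) * (1 + |z|) ^ 3
            + (5600 * C + 700) * (c * exp (9 * δ) ^ n) * (δ * √δ) * (1 + |z|) ^ 3 :=
          (abs_add_le _ _).trans (add_le_add hpropagated hlocal)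
      _ = n * E * exp (9 * δ) ^ (n + 1) * (1 + |z|) ^ 3
            + E * exp (9 * δ) ^ n * (1 + |z|) ^ 3 := by rw [hE]; ring
      _ ≤ n * E * exp (9 * δ) ^ (n + 1) * (1 + |z|) ^ 3
            + E * exp (9 * δ) ^ (n + 1) * (1 + |z|) ^ 3 := by
          gcongr
          · exact one_le_exp (by positivity)
          · exact n.le_succ
      _ = _ := by push_cast; ring

lemma tendsto_affineStep_iterate_weight_mul_sub (hf : IsBoundedJet 3 c f) {t : ℝ} (ht : 0 < t)
    (z : ℝ) :
    Tendsto (fun n : ℕ =>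
      (affineStep (-(t / n)) (factorLaw (t / n)))^[n] (fun r => weight r * f 0 r) z
        - weight z * (affineStep (t / n) (factorLaw (t / n)))^[n] (f 0) z) atTop (𝓝 0) := by
  obtain ⟨C, hC⟩ := exists_isBoundedJet_weightJet 3
  have hmesh : Tendsto (fun n : ℕ => t / (n : ℝ)) atTop (𝓝 0) :=
    tendsto_const_div_atTop_nhds_zero_nat t
  set D := t * ((5600 * C + 700) * c) * exp (9 * t) * (1 + |z|) ^ 3
  have hD : Tendsto (fun n : ℕ => D * √(t / n)) atTop (𝓝 0) := by
    simpa only [sqrt_zero, mul_zero] using hmesh.sqrt.const_mul D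
  refine squeeze_zero_norm' ?_ hD
  filter_upwards [eventually_gt_atTop 0, hmesh.eventually_le_const (by norm_num : (0 : ℝ) < 1 / 10)]
    with n hn hsmall
  have hnt : n * (t / n) = t := mul_div_cancel₀ t (Nat.cast_ne_zero.mpr hn.ne')
  have hexp : exp (9 * (t / n)) ^ n = exp (9 * t) := by
    rw [← exp_nat_mul, mul_left_comm, hnt]
  refine (abs_affineStep_iterate_weight_mul_sub_le hC hf (by positivity) hsmall n z).trans_eq ?_
  rw [hexp]
  calc n * ((5600 * C + 700) * c * (t / n * √(t / n))) * exp (9 * t) * (1 + |z|) ^ 3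
      = n * (t / n) * ((5600 * C + 700) * c) * exp (9 * t) * (1 + |z|) ^ 3 * √(t / n) := by ring
    _ = D * √(t / n) := by rw [hnt]

end Telescoping

/-- The left-endpoint Riemann sum of `g` over the intervals `[jδ, (j + 1)δ]`, `j < n`. -/
def riemannSum (g : ℝ → ℝ) (δ : ℝ) (n : ℕ) : ℝ :=
  δ * ∑ j ∈ Finset.range n, g (j * δ)

section RiemannSum

variable {g : ℝ → ℝ}

lemma riemannSum_succ (g : ℝ → ℝ) (δ : ℝ) (n : ℕ) :
    riemannSum g δ (n + 1) = riemannSum g δ n + δ * g (n * δ) := by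
  rw [riemannSum, Finset.sum_range_succ, mul_add, riemannSum]

lemma abs_mul_sub_integral_le_s1 {u v ε : ℝ} (huv : u ≤ v) (hg : IntervalIntegrable g volume u v)
    (hε : ∀ x ∈ Ioc u v, |g u - g x| ≤ ε) :
    |(v - u) * g u - ∫ x in u..v, g x| ≤ ε * (v - u) := by
  have h := intervalIntegral.norm_integral_le_of_norm_le_const (f := fun x => g u - g x)
    fun x hx => hε x (uIoc_of_le huv ▸ hx)
  rwa [intervalIntegral.integral_sub intervalIntegrable_const hg, intervalIntegral.integral_const,
    abs_of_nonneg (sub_nonneg.mpr huv)] at h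

lemma abs_riemannSum_sub_integral_le {t δ ε : ℝ} (hδ : 0 ≤ δ) (hg : ContinuousOn g (Icc 0 t))
    (hε : ∀ x ∈ Icc 0 t, ∀ y ∈ Icc 0 t, |x - y| ≤ δ → |g x - g y| ≤ ε) (n : ℕ) (hn : n * δ ≤ t) :
    |riemannSum g δ n - ∫ x in 0..n * δ, g x| ≤ ε * (n * δ) := by
  induction n with
  | zero => simp [riemannSum]
  | succ n ih =>
    have hstep : ((n + 1 : ℕ) : ℝ) * δ - n * δ = δ := by push_cast; ring
    have h0 : 0 ≤ n * δ := by positivity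
    have hle : n * δ ≤ (n + 1 : ℕ) * δ := by linarith
    have hint : IntervalIntegrable g volume 0 (n * δ) :=
      (hg.mono (Icc_subset_Icc_right (hle.trans hn))).intervalIntegrable_of_Icc h0
    have hint' : IntervalIntegrable g volume (n * δ) ((n + 1 : ℕ) * δ) :=
      (hg.mono (Icc_subset_Icc h0 hn)).intervalIntegrable_of_Icc hle
    have hcell := abs_mul_sub_integral_le_s1 hle hint' fun x hx =>
      hε _ ⟨h0, hle.trans hn⟩ x ⟨h0.trans hx.1.le, hx.2.trans hn⟩
        (abs_sub_comm x _ ▸ (abs_of_pos (sub_pos.mpr hx.1)).trans_le (by linarith [hx.2]))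
    rw [hstep] at hcell
    calc |riemannSum g δ (n + 1) - ∫ x in 0..(n + 1 : ℕ) * δ, g x|
        = |(riemannSum g δ n - ∫ x in 0..n * δ, g x)
            + (δ * g (n * δ) - ∫ x in n * δ..(n + 1 : ℕ) * δ, g x)| := by
          rw [riemannSum_succ, ← intervalIntegral.integral_add_adjacent_intervals hint hint',
            add_sub_add_comm]
      _ ≤ ε * (n * δ) + ε * δ :=
          (abs_add_le _ _).trans (add_le_add (ih (hle.trans hn)) hcell)
      _ = ε * ((n + 1 : ℕ) * δ) := by push_cast; ring

lemma tendsto_riemannSum_s1 {t : ℝ} (ht : 0 ≤ t) (hg : ContinuousOn g (Icc 0 t)) :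
    Tendsto (fun n : ℕ => riemannSum g (t / n) n) atTop (𝓝 (∫ x in 0..t, g x)) := by
  refine Metric.tendsto_atTop'.mpr fun ε hε => ?_
  obtain ⟨η, hη, hosc⟩ := Metric.uniformContinuousOn_iff.mp
    (isCompact_Icc.uniformContinuousOn_of_continuous hg) (ε / (t + 1)) (by positivity)
  obtain ⟨N, hN⟩ := exists_nat_gt (t / η)
  refine ⟨N, fun n hn => ?_⟩
  have hn0 : (0 : ℝ) < n := by exact_mod_cast N.zero_le.trans_lt hn
  have hmesh : t / n < η := by
    rw [div_lt_comm₀ hn0 hη]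
    exact hN.trans (by exact_mod_cast hn)
  have hnt : n * (t / n) = t := mul_div_cancel₀ t hn0.ne'
  have h := abs_riemannSum_sub_integral_le (by positivity) hg
    (fun x hx y hy hxy => (hosc x hx y hy (hxy.trans_lt hmesh)).le) n hnt.le
  rw [hnt] at h
  calc |riemannSum g (t / n) n - ∫ x in 0..t, g x| ≤ ε / (t + 1) * t := h
    _ < ε := by
      rw [div_mul_eq_mul_div, div_lt_iff₀ (by positivity)]
      nlinarith

end RiemannSum

/-- The factors `M_{kδ} / M_{(k + 1)δ}` of the exponential martingale on the grid of mesh `δ`. -/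
def gridFactor {α : Type*} (B : ℝ → α → ℝ) (δ : ℝ) (k : ℕ) (ω : α) : ℝ :=
  M B (k * δ) ω / M B ((k + 1 : ℕ) * δ) ω

section PathFunctionals

variable {α : Type*} {B : ℝ → α → ℝ} {δ t : ℝ} {ω : α}

lemma M_pos : 0 < M B t ω :=
  exp_pos _

lemma A_nonneg (ht : 0 ≤ t) : 0 ≤ A B t ω :=
  intervalIntegral.integral_nonneg ht fun _ _ => (exp_pos _).le

lemma gridFactor_eq_exp (k : ℕ) :
    gridFactor B δ k ω = exp (δ / 2 - (B ((k + 1 : ℕ) * δ) ω - B (k * δ) ω)) := by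
  rw [gridFactor, M, M, ← exp_sub]
  push_cast
  ring_nf

lemma affineChain_gridFactor (h0 : B 0 ω = 0) (s a : ℝ) (n : ℕ) :
    affineChain (s * δ) a (gridFactor B δ) n ω
      = (a + s * riemannSum (fun u => M B u ω) δ n) / M B (n * δ) ω := by
  induction n with
  | zero => simp [affineChain, riemannSum, M, h0]
  | succ n ih =>
    have hM : M B (n * δ) ω ≠ 0 := M_pos.ne'
    rw [affineChain, ih, gridFactor, riemannSum_succ]
    field_simp
    ring

end PathFunctionals

namespace IsBrownianMotion

variable {P B} {δ t : ℝ}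

lemma continuous_M (hB : IsBrownianMotion P B) (ω : Ω) : Continuous fun t => M B t ω := by
  have := hB.continuous_paths ω
  unfold M
  fun_prop

lemma measurable_M (hB : IsBrownianMotion P B) (t : ℝ) : Measurable (M B t) :=
  ((hB.measurable t).sub_const _).exp

lemma tendsto_riemannSum_A (hB : IsBrownianMotion P B) (ht : 0 ≤ t) (ω : Ω) :
    Tendsto (fun n : ℕ => riemannSum (fun u => M B u ω) (t / n) n) atTop (𝓝 (A B t ω)) :=
  tendsto_riemannSum_s1 ht (hB.continuous_M ω).continuousOn

lemma measurable_A (hB : IsBrownianMotion P B) (ht : 0 ≤ t) : Measurable (A B t) :=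
  measurable_of_tendsto_metrizable
    (fun n => (Finset.measurable_fun_sum (Finset.range n) fun j _ =>
      hB.measurable_M (j * (t / n))).const_mul (t / n))
    (tendsto_pi_nhds.mpr fun ω => hB.tendsto_riemannSum_A ht ω)

lemma measurable_gridFactor (hB : IsBrownianMotion P B) (k : ℕ) : Measurable (gridFactor B δ k) :=
  (hB.measurable_M _).div (hB.measurable_M _)

lemma map_gridFactor (hB : IsBrownianMotion P B) (hδ : 0 ≤ δ) (k : ℕ) :
    P.map (gridFactor B δ k) = factorLaw δ := by
  have hlaw : P.map (fun ω => B ((k + 1 : ℕ) * δ) ω - B (k * δ) ω) = gaussianReal 0 δ.toNNReal := by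
    convert hB.gaussian_increments (k * δ) ((k + 1 : ℕ) * δ) (by positivity) (by gcongr; simp)
      using 3
    push_cast; ring
  have hincr : Measurable fun ω => B ((k + 1 : ℕ) * δ) ω - B (k * δ) ω :=
    (hB.measurable _).sub (hB.measurable _)
  calc P.map (gridFactor B δ k)
      = P.map (exp ∘ (fun x => δ / 2 - x) ∘ fun ω => B ((k + 1 : ℕ) * δ) ω - B (k * δ) ω) := by
        congr 1; ext ω; exact gridFactor_eq_exp k
    _ = ((gaussianReal 0 δ.toNNReal).map fun x => δ / 2 - x).map exp := by
        rw [← Measure.map_map measurable_exp (by fun_prop), ← Measure.map_map (by fun_prop) hincr,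
          hlaw]
    _ = factorLaw δ := by rw [gaussianReal_map_const_sub, sub_zero, factorLaw]

lemma iIndepFun_gridFactor (hB : IsBrownianMotion P B) (hδ : 0 ≤ δ) :
    iIndepFun (gridFactor B δ) P := by
  have hgrid : Monotone fun k : ℕ => k * δ := fun i j hij => by dsimp only; gcongr
  convert (hB.indep_increments _ hgrid (by simp)).comp (fun _ x => exp (δ / 2 - x))
    fun _ => by fun_prop using 2 with k
  ext ω
  exact gridFactor_eq_exp k

lemma tendsto_affineChain_gridFactor (hB : IsBrownianMotion P B) (ht : 0 ≤ t) (s a : ℝ) (ω : Ω) :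
    Tendsto (fun n : ℕ => affineChain (s * (t / n)) a (gridFactor B (t / n)) n ω) atTop
      (𝓝 ((a + s * A B t ω) / M B t ω)) := by
  refine ((((hB.tendsto_riemannSum_A ht ω).const_mul s).const_add a).div_const _).congr' ?_
  filter_upwards [eventually_ne_atTop 0] with n hn
  rw [affineChain_gridFactor (hB.start ω), mul_div_cancel₀ t (Nat.cast_ne_zero.mpr hn)]

lemma tendsto_affineStep_iterate (hB : IsBrownianMotion P B) (ht : 0 ≤ t) {f : ℝ → ℝ} {c : ℝ}
    (hf : Continuous f) (hc : ∀ r, |f r| ≤ c) (s a : ℝ) :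
    Tendsto (fun n : ℕ => (affineStep (s * (t / n)) (factorLaw (t / n)))^[n] f a) atTop
      (𝓝 (∫ ω, f ((a + s * A B t ω) / M B t ω) ∂P)) := by
  have := hB.isProbabilityMeasure
  have hchain (n : ℕ) :
      ∫ ω, f (affineChain (s * (t / n)) a (gridFactor B (t / n)) n ω) ∂P
        = (affineStep (s * (t / n)) (factorLaw (t / n)))^[n] f a :=
    integral_comp_affineChain hB.measurable_gridFactor (hB.iIndepFun_gridFactor (by positivity))
      (hB.map_gridFactor (by positivity)) hf.measurable hc n
  refine (tendsto_integral_of_dominated_convergence (fun _ => c) (fun n => ?_) (integrable_const c)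
    (fun n => ae_of_all _ fun ω => hc _) (ae_of_all _ fun ω =>
      (hf.tendsto _).comp (hB.tendsto_affineChain_gridFactor ht s a ω))).congr hchain
  exact (hf.measurable.comp
    (measurable_affineChain hB.measurable_gridFactor n)).aestronglyMeasurable

/-- Continuous-time form of the intertwining `L₋ (φ f) = φ L₊ f` (see `generator_leibniz_weightJet`)
of the generators of `(a ∓ A) / M`. -/
lemma integral_weight_mul_comp (hB : IsBrownianMotion P B) (ht : 0 < t) {c d : ℝ}
    {f : ℕ → ℝ → ℝ} (hf : IsBoundedJet 3 c f) (hcont : Continuous (f 0)) (hd : ∀ r, |f 0 r| ≤ d)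
    (a : ℝ) :
    ∫ ω, weight ((a - A B t ω) / M B t ω) * f 0 ((a - A B t ω) / M B t ω) ∂P
      = weight a * ∫ ω, f 0 ((a + A B t ω) / M B t ω) ∂P := by
  have hminus := hB.tendsto_affineStep_iterate ht.le (continuous_weight.mul hcont)
    hf.abs_weight_mul_le (-1) a
  have hplus := (hB.tendsto_affineStep_iterate ht.le hcont hd 1 a).const_mul (weight a)
  simp only [neg_one_mul, one_mul, ← sub_eq_add_neg] at hminus hplus
  exact sub_eq_zero.mp (tendsto_nhds_unique (hminus.sub hplus)
    (tendsto_affineStep_iterate_weight_mul_sub hf ht a))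

end IsBrownianMotion

lemma tsum_ofReal_one_sub_pow {p : ℝ} (hp : 0 < p) (hp1 : p ≤ 1) :
    ∑' k : ℕ, ENNReal.ofReal ((1 - p) ^ k) = ENNReal.ofReal p⁻¹ := by
  have hq : 0 ≤ 1 - p := sub_nonneg.mpr hp1
  simp_rw [ENNReal.ofReal_pow hq]
  rw [ENNReal.tsum_geometric, ← ENNReal.ofReal_one, ← ENNReal.ofReal_sub _ hq, sub_sub_cancel,
    ENNReal.ofReal_inv_of_pos hp]

lemma tsum_ofReal_weight_mul_one_sub_pow (z : ℝ) :
    ∑' k : ℕ, ENNReal.ofReal (weight z * (1 - weight z) ^ k) = (Ioi 0).indicator 1 z := by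
  simp_rw [ENNReal.ofReal_mul (weight_nonneg z)]
  rw [ENNReal.tsum_mul_left]
  rcases le_or_gt z 0 with hz | hz
  · rw [weight_of_nonpos hz, ENNReal.ofReal_zero, zero_mul, indicator_of_notMem (notMem_Ioi.mpr hz)]
  · rw [tsum_ofReal_one_sub_pow (weight_pos hz) (weight_le_one z),
      ← ENNReal.ofReal_mul (weight_nonneg z), mul_inv_cancel₀ (weight_pos hz).ne',
      indicator_of_mem (mem_Ioi.mpr hz), ENNReal.ofReal_one, Pi.one_apply]

lemma one_sub_weight_nonneg (r : ℝ) : 0 ≤ 1 - weight r :=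
  sub_nonneg.mpr (weight_le_one r)

lemma abs_one_sub_weight_pow_le_one (k : ℕ) (r : ℝ) : |(1 - weight r) ^ k| ≤ 1 := by
  rw [abs_pow, abs_of_nonneg (one_sub_weight_nonneg r)]
  exact pow_le_one₀ (one_sub_weight_nonneg r) (sub_le_self 1 (weight_nonneg r))

lemma exists_isBoundedJet_one_sub_weight_pow (n k : ℕ) :
    ∃ c f, IsBoundedJet n c f ∧ f 0 = fun r => (1 - weight r) ^ k := by
  obtain ⟨c, hc⟩ := exists_isBoundedJet_weightJet n
  obtain ⟨d, f, hf, hf0⟩ := ((IsBoundedJet.const n 1).sub hc).exists_pow k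
  refine ⟨d, f, hf, hf0.trans ?_⟩
  ext r
  simp [weightJet_zero]

namespace IsBrownianMotion

variable {P B} {t a : ℝ}

lemma lintegral_weight_mul_one_sub_weight_pow (hB : IsBrownianMotion P B) (ht : 0 < t) (k : ℕ) :
    ∫⁻ ω, ENNReal.ofReal (weight ((a - A B t ω) / M B t ω) *
        (1 - weight ((a - A B t ω) / M B t ω)) ^ k) ∂P
      = ENNReal.ofReal (weight a) *
        ∫⁻ ω, ENNReal.ofReal ((1 - weight ((a + A B t ω) / M B t ω)) ^ k) ∂P := by
  have := hB.isProbabilityMeasure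
  have hA := hB.measurable_A ht.le
  have hM := hB.measurable_M t
  have hw : Measurable weight := continuous_weight.measurable
  have hpow (r : ℝ) : 0 ≤ (1 - weight r) ^ k := pow_nonneg (one_sub_weight_nonneg r) k
  obtain ⟨c, f, hf, hf0⟩ := exists_isBoundedJet_one_sub_weight_pow 3 k
  have hintertwine := hB.integral_weight_mul_comp ht hf
    (hf0 ▸ (continuous_const.sub continuous_weight).pow k)
    (by simpa only [hf0] using abs_one_sub_weight_pow_le_one k) a
  simp only [hf0] at hintertwine
  rw [← ofReal_integral_eq_lintegral_ofReal, hintertwine, ENNReal.ofReal_mul (weight_nonneg a),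
    ofReal_integral_eq_lintegral_ofReal]
  · exact .of_bound (Measurable.aestronglyMeasurable (by fun_prop)) 1
      (ae_of_all _ fun ω => abs_one_sub_weight_pow_le_one k _)
  · exact ae_of_all _ fun ω => hpow _
  · refine .of_bound (by fun_prop) 1 (ae_of_all _ fun ω => ?_)
    rw [norm_mul]
    exact mul_le_one₀ (abs_weight_le_one _) (abs_nonneg _) (abs_one_sub_weight_pow_le_one k _)
  · exact ae_of_all _ fun ω => mul_nonneg (weight_nonneg _) (hpow _)

lemma measure_A_lt (hB : IsBrownianMotion P B) (ht : 0 < t) (ha : 0 < a) :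
    P {ω | A B t ω < a} = ENNReal.ofReal (weight a) *
      ∫⁻ ω, ENNReal.ofReal (weight ((a + A B t ω) / M B t ω))⁻¹ ∂P := by
  have hA := hB.measurable_A ht.le
  have hM := hB.measurable_M t
  have hw : Measurable weight := continuous_weight.measurable
  have hpos (ω : Ω) : 0 < (a + A B t ω) / M B t ω :=
    div_pos (add_pos_of_pos_of_nonneg ha (A_nonneg ht.le)) M_pos
  have hlt : {ω | A B t ω < a} = (fun ω => (a - A B t ω) / M B t ω) ⁻¹' Ioi 0 := by
    ext ω
    rw [mem_preimage, mem_Ioi, div_pos_iff_of_pos_right M_pos, sub_pos, mem_ofPred_eq]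
  calc P {ω | A B t ω < a}
      = ∫⁻ ω, ∑' k : ℕ, ENNReal.ofReal (weight ((a - A B t ω) / M B t ω) *
          (1 - weight ((a - A B t ω) / M B t ω)) ^ k) ∂P := by
        simp_rw [tsum_ofReal_weight_mul_one_sub_pow]
        rw [hlt, ← lintegral_indicator_one (measurableSet_Ioi.preimage (by fun_prop))]
        rfl
    _ = ∑' k : ℕ, ENNReal.ofReal (weight a) *
          ∫⁻ ω, ENNReal.ofReal ((1 - weight ((a + A B t ω) / M B t ω)) ^ k) ∂P := by
        rw [lintegral_tsum fun k => by fun_prop]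
        exact tsum_congr (hB.lintegral_weight_mul_one_sub_weight_pow ht)
    _ = ENNReal.ofReal (weight a) *
          ∫⁻ ω, ENNReal.ofReal (weight ((a + A B t ω) / M B t ω))⁻¹ ∂P := by
        rw [ENNReal.tsum_mul_left, ← lintegral_tsum fun k => by fun_prop]
        simp_rw [tsum_ofReal_one_sub_pow (weight_pos (hpos _)) (weight_le_one _)]

end IsBrownianMotion

theorem cdf_A_eq (hB : IsBrownianMotion P B) (t a : ℝ) (ht : 0 < t) (ha : 0 < a) :
    (P {ω | A B t ω < a}).toReal
      = Real.exp (-2 / a) * ∫ ω, Real.exp (2 * M B t ω / (a + A B t ω)) ∂P := by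
  have hA := hB.measurable_A ht.le
  have hM := hB.measurable_M t
  have hinv (ω : Ω) :
      (weight ((a + A B t ω) / M B t ω))⁻¹ = exp (2 * M B t ω / (a + A B t ω)) := by
    have hpos : 0 < a + A B t ω := add_pos_of_pos_of_nonneg ha (A_nonneg ht.le)
    rw [weight_of_pos (div_pos hpos M_pos), ← exp_neg, neg_div, neg_neg, div_div_eq_mul_div]
  rw [hB.measure_A_lt ht ha, ENNReal.toReal_mul, ENNReal.toReal_ofReal (weight_nonneg a),
    weight_of_pos ha, integral_eq_lintegral_of_nonneg_ae (ae_of_all _ fun ω => (exp_pos _).le)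
      (Measurable.aestronglyMeasurable (by fun_prop))]
  simp_rw [hinv]
end
end
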